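/- There exists a constant C > 0 such that for every integer R ≥ 2 the following holds: if α ∈ (0,1/2) is irrational and its regular continued fraction expansion (all partial quotients ≥ 2) is eventually periodic with period five, the partial quotients eventually cycling through R_**, R_*, R_*, R_*, R_*, then |ρ(α) − (1/4)(1 − 2/R_* − 2/R_*²)| ≤ C/R_*³. -/

import Mathlib

open Filter Finset

attribute [local instance] Classical.propDecidable

/-- Distance from `x` to the nearest integer, `‖x‖`. -/
noncomputable def nint (x : ℝ) : ℝ := |x - round x|

/-- The two-sided inhomogeneous approximation constant
`M(α,γ) = liminf_{|n|→∞} |n|·‖nα-γ‖`. -/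
noncomputable def Mval (α γ : ℝ) : ℝ :=
  Filter.liminf (fun n : ℤ => (|n| : ℝ) * nint (n * α - γ)) Filter.cofinite

/-- `ρ(α) = sup { M(α,γ) : γ ∉ ℤ + αℤ }`. -/
noncomputable def rho (α : ℝ) : ℝ :=
  sSup {m : ℝ | ∃ γ : ℝ, (¬∃ p q : ℤ, γ = (p : ℝ) + (q : ℝ) * α) ∧ m = Mval α γ}

/-- The tails `α_i` of the nearest integer continued fraction expansion of `α`. -/
noncomputable def nicfT (α : ℝ) : ℕ → ℝ
  | 0 => α
  | i + 1 =>
    if Int.fract (nicfT α i)⁻¹ ≤ 1 / 2 then Int.fract (nicfT α i)⁻¹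
    else 1 - Int.fract (nicfT α i)⁻¹

/-- The partial quotients `a_i` (meaningful for `i ≥ 1`) of the NICF expansion. -/
noncomputable def nicfA (α : ℝ) : ℕ → ℤ
  | 0 => 0
  | i + 1 => if Int.fract (nicfT α i)⁻¹ ≤ 1 / 2 then ⌊(nicfT α i)⁻¹⌋ else ⌈(nicfT α i)⁻¹⌉

/-- The signs `ε_i` of the NICF expansion (`ε_1 = 1`). -/
noncomputable def nicfE (α : ℝ) : ℕ → ℤ
  | 0 => 1
  | 1 => 1
  | i + 2 => if Int.fract (nicfT α i)⁻¹ ≤ 1 / 2 then 1 else -1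

/-- `nicfD α n = D_{n-1} = α_0 α_1 ⋯ α_{n-1}` (so `nicfD α 0 = 1`, `nicfD α 1 = α`). -/
noncomputable def nicfD (α : ℝ) (n : ℕ) : ℝ := ∏ j ∈ Finset.range n, nicfT α j

/-- The number of indices `1 ≤ k ≤ i` with `a_k` odd. -/
noncomputable def oddIdx (α : ℝ) (i : ℕ) : ℕ :=
  ((Finset.Icc 1 i).filter fun k => Odd (nicfA α k)).card

/-- `λ_i`: zero if `a_i` is even, `(-1)^j` if `a_i = a_{n_j}` is the `j`-th odd partial
quotient. -/
noncomputable def lamStar (α : ℝ) (i : ℕ) : ℤ :=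
  if Odd (nicfA α i) then (-1) ^ oddIdx α i else 0

/-- `γ_* = Σ_{i≥1} (a_i - 1 + ε_i + λ_i)/2 · D_{i-1}`. -/
noncomputable def gammaStar (α : ℝ) : ℝ :=
  ∑' k : ℕ,
    (((nicfA α (k + 1) : ℝ) - 1 + (nicfE α (k + 1) : ℝ) + (lamStar α (k + 1) : ℝ)) / 2) *
      nicfD α (k + 1)

/-- `λ'_i`: zero if `a_i` is even, one if `a_i` is odd. -/
noncomputable def lamStar2 (α : ℝ) (i : ℕ) : ℤ := if Odd (nicfA α i) then 1 else 0

/-- `γ_** = Σ_{i≥1} (a_i + λ'_i)/2 · D_{i-1}`. -/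
noncomputable def gammaStar2 (α : ℝ) : ℝ :=
  ∑' k : ℕ, (((nicfA α (k + 1) : ℝ) + (lamStar2 α (k + 1) : ℝ)) / 2) * nicfD α (k + 1)

/-- The denominators `q_i`: `q_0 = 1`, `q_1 = a_1`, `q_i = a_i q_{i-1} + ε_i q_{i-2}`. -/
noncomputable def qseq (α : ℝ) : ℕ → ℤ
  | 0 => 1
  | 1 => nicfA α 1
  | i + 2 => nicfA α (i + 2) * qseq α (i + 1) + nicfE α (i + 2) * qseq α i

/-- `ᾱ_i = q_{i-1}/q_i` (with `ᾱ_0 = 0`). -/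
noncomputable def abar (α : ℝ) (i : ℕ) : ℝ :=
  if i = 0 then 0 else (qseq α (i - 1) : ℝ) / (qseq α i : ℝ)

/-- `δ_i = -(-ε_1)(-ε_2)⋯(-ε_{i+1})`. -/
noncomputable def deltaSeq (α : ℝ) (i : ℕ) : ℤ := -∏ j ∈ Finset.Icc 1 (i + 1), (-nicfE α j)

/-- `d_n^- = (Σ_{i=1}^n t_i δ_{i-1} q_{i-1}) / (δ_{n-1} q_n)` for `γ_*` (so `t_i = λ_i`). -/
noncomputable def dminus (α : ℝ) (n : ℕ) : ℝ :=
  (∑ i ∈ Finset.Icc 1 n, (lamStar α i : ℝ) * (deltaSeq α (i - 1) : ℝ) * (qseq α (i - 1) : ℝ)) /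
    ((deltaSeq α (n - 1) : ℝ) * (qseq α n : ℝ))

/-- `d_n^+ = (Σ_{i=n+1}^∞ t_i D_{i-1}) / D_{n-1}` for `γ_*` (so `t_i = λ_i`). -/
noncomputable def dplus (α : ℝ) (n : ℕ) : ℝ :=
  (∑' k : ℕ, (lamStar α (n + 1 + k) : ℝ) * nicfD α (n + 1 + k)) / nicfD α n

/-- `d_n^-` for `γ_**` (so `t_i = λ'_i`). -/
noncomputable def dminus2 (α : ℝ) (n : ℕ) : ℝ :=
  (∑ i ∈ Finset.Icc 1 n, (lamStar2 α i : ℝ) * (deltaSeq α (i - 1) : ℝ) * (qseq α (i - 1) : ℝ)) /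
    ((deltaSeq α (n - 1) : ℝ) * (qseq α n : ℝ))

/-- `d_n^+` for `γ_**` (so `t_i = λ'_i`). -/
noncomputable def dplus2 (α : ℝ) (n : ℕ) : ℝ :=
  (∑' k : ℕ, (lamStar2 α (n + 1 + k) : ℝ) * nicfD α (n + 1 + k)) / nicfD α n

/-- `i ∈ S(γ_*)`: `|d_i^-| ≤ 1 - ᾱ_i` and `-(1-ε_{i+1}α_i) ≤ d_i^+ ≤ 1+ε_{i+1}α_i`. -/
def inS (α : ℝ) (i : ℕ) : Prop :=
  |dminus α i| ≤ 1 - abar α i ∧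
    -(1 - (nicfE α (i + 1) : ℝ) * nicfT α i) ≤ dplus α i ∧
      dplus α i ≤ 1 + (nicfE α (i + 1) : ℝ) * nicfT α i

/-- `i ∈ S(γ_**)`. -/
def inS2 (α : ℝ) (i : ℕ) : Prop :=
  |dminus2 α i| ≤ 1 - abar α i ∧
    -(1 - (nicfE α (i + 1) : ℝ) * nicfT α i) ≤ dplus2 α i ∧
      dplus2 α i ≤ 1 + (nicfE α (i + 1) : ℝ) * nicfT α i

/-- The remainders `γ_i` of the alpha-expansion of `γ`: `γ_0 = γ`,
`γ_{i+1} = {γ_i/α_i}`. -/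
noncomputable def gSeq (α γ : ℝ) : ℕ → ℝ
  | 0 => γ
  | i + 1 => Int.fract (gSeq α γ i / nicfT α i)

/-- The coefficients `c_i` (for `i ≥ 1`) of the alpha-expansion of `γ`:
`c_{i+1} = ⌊γ_i/α_i⌋`. -/
noncomputable def cCoef (α γ : ℝ) (i : ℕ) : ℤ := ⌊gSeq α γ (i - 1) / nicfT α (i - 1)⌋

/-!
The products `|n| ‖n α - γ‖` are a quarter of the products `|X Y|` over the points with odd indices
of a grid in the plane. A step of the continued fraction is a change of basis that rescales both
axes and does not affect `|X Y|` divided by the determinant `1 + u v` of the grid, so the grid may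
be examined at every level, near the origin. Write `e = 1 / R_*`. If all far points satisfy
`|X Y| ≥ W (1 + u v)` with `W ≥ 1 - 2.05 e`, the four vertices of the cell around the origin force
`|x| + |y| ≤ 2.1 e` for the displacement `(x, y)` of the grid. The digits governing `(x, y)` have
the parity of the partial quotients, hence are `0` at the even partial quotient and `±1` at the four
odd ones. The two middle odd digits of a period are equal or opposite, and in both cases some level
has `|x| + |y| ≥ 2 e + e² + O(e³)`, which gives `W ≤ 1 - 2 e - 2 e² + O(e³)`. Conversely, the digits
`0, 1, 1, 1, 1` define a `γ` attaining this value up to `O(e³)`. Small `R` are absorbed in the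
constant, since `0 ≤ ρ ≤ 4`.
-/

section Grid

variable {W δ u v u' v' x y y' : ℝ} {a t m k : ℤ}

/-- First coordinate of the point with indices `(m, k)` of the grid centred at `(x, y)`. The
problem is encoded by the points with both indices odd: at level `n` of the continued fraction,
`u` is the tail `α_n` and `v` is `q_{n-1} / q_n`. -/
def gridX (v x : ℝ) (m k : ℤ) : ℝ := x + m + k * v

/-- Second coordinate of the point with indices `(m, k)` of the grid centred at `(x, y)`. -/
def gridY (u y : ℝ) (m k : ℤ) : ℝ := y + m * u - k

/-- The points of the odd grid in the strip `|Y| < δ` all satisfy `W (1 + u v) ≤ |X Y|`. The factor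
`1 + u v` is the determinant of the grid, so that `W` does not depend on the level. -/
def GridBound (W δ u v x y : ℝ) : Prop :=
  ∀ m k : ℤ, Odd m → Odd k → |gridY u y m k| < δ →
    W * (1 + u * v) ≤ |gridX v x m k| * |gridY u y m k|

/-- The inequality of `GridBound` at the four grid points with indices `±1`, the vertices of the
cell around the origin. -/
def VertexBound (W u v x y : ℝ) : Prop :=
  ∀ m k : ℤ, IsUnit m → IsUnit k → W * (1 + u * v) ≤ |gridX v x m k| * |gridY u y m k|

lemma odd_of_isUnit (hm : IsUnit m) : Odd m := by
  rcases Int.isUnit_iff.mp hm with rfl | rfl <;> decide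

lemma abs_intCast_of_isUnit (hm : IsUnit m) : |(m : ℝ)| = 1 := by
  exact_mod_cast Int.isUnit_iff_abs_eq.mp hm

lemma three_le_abs_of_odd (hm : Odd m) (h : ¬IsUnit m) : (3 : ℝ) ≤ |(m : ℝ)| := by
  rw [Int.isUnit_iff] at h
  obtain ⟨j, rfl⟩ := hm
  exact_mod_cast (show (3 : ℤ) ≤ |2 * j + 1| by rw [le_abs]; omega)

lemma GridBound.mono {δ' : ℝ} (h : GridBound W δ u v x y) (hδ : δ' ≤ δ) :
    GridBound W δ' u v x y :=
  fun m k hm hk hY => h m k hm hk (hY.trans_le hδ)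

lemma GridBound.vertexBound (h : GridBound W δ u v x y) (hδ : |y| + |u| + 1 < δ) :
    VertexBound W u v x y := by
  intro m k hm hk
  refine h m k (odd_of_isUnit hm) (odd_of_isUnit hk) (lt_of_le_of_lt ?_ hδ)
  calc |y + m * u - k| ≤ |y + m * u| + |(k : ℝ)| := abs_sub _ _
    _ ≤ |y| + |m * u| + |(k : ℝ)| := by gcongr; exact abs_add_le _ _
    _ = |y| + |u| + 1 := by
      rw [abs_mul, abs_intCast_of_isUnit hm, abs_intCast_of_isUnit hk, one_mul]

lemma gridX_step (hv : v' * (a + v) = 1) :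
    gridX v' (v' * (t - x)) (-k) (-m - t + k * a) = -v' * gridX v x m k := by
  simp only [gridX]
  push_cast
  linear_combination (k : ℝ) * hv

lemma gridY_step (hu : u * (a + u') = 1) (hy : y = u * (t + y')) :
    u * gridY u' y' (-k) (-m - t + k * a) = gridY u y m k := by
  simp only [gridY]
  push_cast
  linear_combination (-(k : ℝ)) * hu - hy

lemma odd_step (ht : Even (t + a)) (hm : Odd m) (hk : Odd k) : Odd (-m - t + k * a) := by
  rw [show -m - t + k * a = -m + (k - 1) * a - (t + a) + 2 * a by ring]
  exact ((hm.neg.add_even ((hk.sub_odd odd_one).mul_right a)).sub_even ht).add_even (even_two_mul a)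

lemma one_add_mul_step (hu : u * (a + u') = 1) (hv : v' * (a + v) = 1) :
    v' * (1 + u * v) = u * (1 + u' * v') := by
  linear_combination u * hv - v' * hu

/-- Passing to the next level divides the second coordinate by `u`, which widens the strip. -/
lemma GridBound.step (hu : u * (a + u') = 1) (hv : v' * (a + v) = 1) (hu0 : 0 < u) (hv0 : 0 < v')
    (ht : Even (t + a)) (h : GridBound W δ u v x y) :
    GridBound W (δ / u) u' v' (v' * (t - x)) (y / u - t) := by
  intro m k hm hk hY
  have hk' : -(-k - t - m * a) - t + -m * a = k := by ring
  have eX := gridX_step (t := t) (x := x) (m := -k - t - m * a) (k := -m) hv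
  have eY := gridY_step (y := y) (m := -k - t - m * a) (k := -m) hu
    (show y = u * (t + (y / u - t)) by field_simp; ring)
  rw [neg_neg, hk'] at eX eY
  have key := h (-k - t - m * a) (-m)
    (by simpa [sub_eq_add_neg, add_comm, add_left_comm] using odd_step ht hk hm.neg) hm.neg (by
      rwa [← eY, abs_mul, abs_of_pos hu0, ← lt_div_iff₀' hu0])
  rw [← eY, abs_mul, abs_of_pos hu0] at key
  rw [eX, abs_mul, abs_neg, abs_of_pos hv0]
  refine le_of_mul_le_mul_left ?_ hu0
  calc u * (W * (1 + u' * v')) = v' * (W * (1 + u * v)) := by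
        linear_combination -W * one_add_mul_step hu hv
    _ ≤ v' * (|gridX v x (-k - t - m * a) (-m)| * (u * |gridY u' (y / u - t) m k|)) := by gcongr
    _ = _ := by ring

/-- The vertex opposite to the quadrant of `(x, y)` is the one that matters. -/
lemma VertexBound.exists_sign (h : VertexBound W u v x y) :
    ∃ σ : ℝ, (σ = 1 ∨ σ = -1) ∧ W * (1 + u * v) ≤ |1 - |x| - σ * v| * |1 - |y| + σ * u| := by
  have vertex (s τ : ℤ) (hs : IsUnit s) (hτ : IsUnit τ) (hx : |x| = s * x) (hy : |y| = τ * y) :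
      W * (1 + u * v) ≤ |1 - |x| - (s * τ : ℤ) * v| * |1 - |y| + (s * τ : ℤ) * u| := by
    refine (h (-s) τ hs.neg hτ).trans_eq ?_
    have hs2 : (s : ℝ) * s = 1 := by exact_mod_cast Int.isUnit_mul_self hs
    have hτ2 : (τ : ℝ) * τ = 1 := by exact_mod_cast Int.isUnit_mul_self hτ
    have eX : gridX v x (-s) τ = -(s * (1 - |x| - (s * τ : ℤ) * v)) := by
      rw [gridX, hx]
      push_cast
      linear_combination (-x - τ * v) * hs2
    have eY : gridY u y (-s) τ = -(τ * (1 - |y| + (s * τ : ℤ) * u)) := by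
      rw [gridY, hy]
      push_cast
      linear_combination (-y + s * u) * hτ2
    rw [eX, eY, abs_neg, abs_neg, abs_mul, abs_mul, abs_intCast_of_isUnit hs,
      abs_intCast_of_isUnit hτ, one_mul, one_mul]
  rcases le_total 0 x with hx | hx <;> rcases le_total 0 y with hy | hy
  · exact ⟨1, .inl rfl, by simpa using vertex 1 1 (by simp) (by simp) (by simpa) (by simpa)⟩
  · exact ⟨-1, .inr rfl, by simpa using vertex 1 (-1) (by simp) (by simp) (by simpa) (by simpa)⟩
  · exact ⟨-1, .inr rfl, by simpa using vertex (-1) 1 (by simp) (by simp) (by simpa) (by simpa)⟩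
  · exact ⟨1, .inl rfl, by simpa using vertex (-1) (-1) (by simp) (by simp) (by simpa) (by simpa)⟩

end Grid

section Cell

variable {W u v w x y z e : ℝ} {t : ℤ}

lemma pow_succ_le_div (n : ℕ) (he : 0 < e) (he1 : e ≤ 1 / 1000) : e ^ (n + 1) ≤ e ^ n / 1000 := by
  rw [pow_succ, div_eq_mul_one_div]
  gcongr

lemma mul_abs_lt_of_near (he : e ≤ 1 / 1000) (hW : 1 - 2.05 * e ≤ W) (hx : |x| ≤ 0.45)
    (hy : |y| ≤ 1.3) : |x| * |y| < W := by
  have : |x| * |y| ≤ 0.45 * 1.3 := by gcongr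
  linarith

/-- First step of the localisation: the product at the vertex near the quadrant of `(x, y)` is far
below `1` unless `x` and `y` are. -/
lemma VertexBound.abs_lt (he : 0 < e) (he1 : e ≤ 1 / 1000) (hu : |u - e| ≤ 2 * e ^ 2)
    (hv : |v - e| ≤ 2 * e ^ 2) (hW : 1 - 2.05 * e ≤ W) (hx : |x| ≤ 1.01) (hy : |y| ≤ 1.2)
    (h : VertexBound W u v x y) : |x| < 0.6 ∧ |y| < 0.6 := by
  have he2 := pow_succ_le_div 1 he he1
  obtain ⟨hu1, hu2⟩ := abs_le.mp hu
  obtain ⟨hv1, hv2⟩ := abs_le.mp hv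
  obtain ⟨σ, hσ, hP⟩ := h.exists_sign
  have hW' : 1 - 2.05 * e ≤ W * (1 + u * v) :=
    hW.trans (le_mul_of_one_le_right (by linarith) (by nlinarith))
  have hx0 := abs_nonneg x
  have hy0 := abs_nonneg y
  constructor <;> by_contra! hlt <;> refine hP.not_gt ?_
  · refine mul_abs_lt_of_near he1 hW' ?_ ?_ <;> rw [abs_le] <;>
      rcases hσ with rfl | rfl <;> constructor <;> linarith
  · rw [mul_comm]
    refine mul_abs_lt_of_near he1 hW' ?_ ?_ <;> rw [abs_le] <;>
      rcases hσ with rfl | rfl <;> constructor <;> linarith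

lemma VertexBound.abs_add_abs_le (he : 0 < e) (he1 : e ≤ 1 / 1000) (hu : |u - e| ≤ 2 * e ^ 2)
    (hv : |v - e| ≤ 2 * e ^ 2) (hW : 1 - 2.05 * e ≤ W) (hx : |x| ≤ 1.01) (hy : |y| ≤ 1.2)
    (h : VertexBound W u v x y) : |x| + |y| ≤ 2.1 * e := by
  have he2 := pow_succ_le_div 1 he he1
  obtain ⟨hx6, hy6⟩ := h.abs_lt he he1 hu hv hW hx hy
  obtain ⟨hu1, hu2⟩ := abs_le.mp hu
  obtain ⟨hv1, hv2⟩ := abs_le.mp hv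
  obtain ⟨σ, hσ, hP⟩ := h.exists_sign
  have huv : 0 ≤ u * v := mul_nonneg (by linarith) (by linarith)
  have hW' : 1 - 2.05 * e ≤ W * (1 + u * v) :=
    hW.trans (le_mul_of_one_le_right (by linarith) (by linarith))
  have hp := abs_nonneg x
  have hq := abs_nonneg y
  set p := |x|
  set q := |y|
  have hpu : p * u ≤ p * (1.002 * e) := by gcongr; linarith
  have hqv : q * v ≤ q * (1.002 * e) := by gcongr; linarith
  have hpu0 : 0 ≤ p * u := mul_nonneg hp (by linarith)
  have hqv0 : 0 ≤ q * v := mul_nonneg hq (by linarith)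
  have expand : p + q ≤ 2.054 * e + p * q + 1.002 * e * (p + q) := by
    rw [← abs_mul, abs_of_pos] at hP
    · rcases hσ with rfl | rfl <;> linarith
    · rcases hσ with rfl | rfl <;> apply mul_pos <;> linarith
  have coarse : p + q ≤ 3 * e := by nlinarith [sq_nonneg (p - q)]
  nlinarith [sq_nonneg (p - q)]

lemma VertexBound.le_of_le_abs_add_abs (he : 0 < e) (he1 : e ≤ 1 / 1000)
    (hu : u ∈ Set.Icc (e - 2 * e ^ 3) e) (hv : v ∈ Set.Icc (e - 2 * e ^ 3) e)
    (hx : |x| ≤ e + 3 * e ^ 2) (hy : |y| ≤ e + 3 * e ^ 2)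
    (hxy : 2 * e + e ^ 2 - 50 * e ^ 3 ≤ |x| + |y|) (h : VertexBound W u v x y) :
    W ≤ 1 - 2 * e - 2 * e ^ 2 + 100 * e ^ 3 := by
  have he2 := pow_succ_le_div 1 he he1
  have he3 := pow_succ_le_div 2 he he1
  have he4 := pow_succ_le_div 3 he he1
  have he30 : 0 < e ^ 3 := by positivity
  obtain ⟨hu1, hu2⟩ := hu
  obtain ⟨hv1, hv2⟩ := hv
  obtain ⟨σ, hσ, hP⟩ := h.exists_sign
  have hp := abs_nonneg x
  have hq := abs_nonneg y
  set p := |x|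
  set q := |y|
  have cross {P Q : ℝ} (hP0 : 0 ≤ P) (hP : P ≤ 3 * e) (hQ : Q ≤ 4 * e ^ 2) :
      P * Q ≤ 12 * e ^ 3 := by
    nlinarith [mul_le_mul_of_nonneg_left hQ hP0, mul_le_mul_of_nonneg_right hP (sq_nonneg e)]
  have hWuv : W * (1 + u * v) ≤ 1 - 2 * e - e ^ 2 + 70 * e ^ 3 := by
    rw [← abs_mul, abs_of_pos] at hP
    · rcases hσ with rfl | rfl
      · linarith [cross (P := p + v) (Q := q - u) (by linarith) (by linarith) (by linarith)]
      · linarith [cross (P := q + u) (Q := p - v) (by linarith) (by linarith) (by linarith)]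
    · rcases hσ with rfl | rfl <;> apply mul_pos <;> linarith
  have huv : e ^ 2 - 4 * e ^ 4 ≤ u * v := by
    nlinarith [mul_le_mul hu1 hv1 (by linarith) (by linarith), sq_nonneg (e ^ 3)]
  by_contra! hlt
  have : (1 - 2 * e - 2 * e ^ 2 + 100 * e ^ 3) * (1 + (e ^ 2 - 4 * e ^ 4)) ≤ W * (1 + u * v) := by
    gcongr <;> linarith
  have he5 : 0 ≤ e ^ 5 := by positivity
  have he7 : e ^ 7 ≤ e ^ 4 := pow_le_pow_of_le_one he.le (by linarith) (by norm_num)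
  have he6 : 0 ≤ e ^ 6 := by positivity
  linarith

lemma abs_unit_add_mem_Icc {b : ℝ} (ht : IsUnit t) (hz : |z| ≤ b) :
    |(t : ℝ) + z| ∈ Set.Icc (1 - b) (1 + b) := by
  have h1 := abs_add_le (t : ℝ) z
  have h2 := abs_sub_abs_le_abs_sub (t : ℝ) (-z)
  rw [sub_neg_eq_add, abs_neg] at h2
  rw [abs_intCast_of_isUnit ht] at h1 h2
  constructor <;> linarith

lemma abs_mul_unit_add_mem_Icc (he : 0 < e) (he1 : e ≤ 1 / 1000)
    (hv : v ∈ Set.Icc (e - 2 * e ^ 3) e) (ht : IsUnit t) (hz : |z| ≤ 2.2 * e ^ 2) :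
    |v * (t + z)| ∈ Set.Icc (e - 5 * e ^ 3) (e + 3 * e ^ 2) := by
  have he2 := pow_succ_le_div 1 he he1
  have he3 := pow_succ_le_div 2 he he1
  have he50 : 0 < e ^ 5 := by positivity
  have he30 : 0 < e ^ 3 := by positivity
  obtain ⟨hz1, hz2⟩ := abs_unit_add_mem_Icc ht hz
  have hv0 : 0 ≤ v := by linarith [hv.1]
  rw [abs_mul, abs_of_nonneg hv0]
  constructor
  · calc e - 5 * e ^ 3 ≤ (e - 2 * e ^ 3) * (1 - 2.2 * e ^ 2) := by linarith
      _ ≤ v * |t + z| := by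
        gcongr
        · linarith
        · exact hv.1
  · calc v * |t + z| ≤ e * (1 + 2.2 * e ^ 2) := by
          gcongr
          exact hv.2
      _ ≤ e + 3 * e ^ 2 := by linarith

lemma abs_mul_unit_add_mul_unit_add_mem_Icc (he : 0 < e) (he1 : e ≤ 1 / 1000)
    (hv : v ∈ Set.Icc (e - 2 * e ^ 3) e) (hw : w ∈ Set.Icc (e - 2 * e ^ 3) e) (ht : IsUnit t)
    (hz : |z| ≤ 2.1 * e) :
    |v * (t + w * (t + z))| ∈ Set.Icc (e + e ^ 2 - 10 * e ^ 3) (e + 3 * e ^ 2) := by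
  have he2 := pow_succ_le_div 1 he he1
  have he3 := pow_succ_le_div 2 he he1
  have he4 := pow_succ_le_div 3 he he1
  have he50 : 0 < e ^ 5 := by positivity
  have he40 : 0 < e ^ 4 := by positivity
  have hv0 : 0 ≤ v := by linarith [hv.1]
  have hw0 : 0 ≤ w := by linarith [hw.1]
  have ht2 : (t : ℝ) * t = 1 := by exact_mod_cast Int.isUnit_mul_self ht
  have htz : |t * z| ≤ 2.1 * e := by rwa [abs_mul, abs_intCast_of_isUnit ht, one_mul]
  obtain ⟨hz1, hz2⟩ := abs_le.mp htz
  have factor : |v * (t + w * (t + z))| = v * (1 + w * (1 + t * z)) := by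
    rw [show v * (t + w * (t + z)) = t * (v * (1 + w * (1 + t * z))) by
        linear_combination (-v * w * z) * ht2,
      abs_mul, abs_intCast_of_isUnit ht, one_mul, abs_of_nonneg]
    exact mul_nonneg hv0 (add_nonneg zero_le_one (mul_nonneg hw0 (by linarith)))
  have lower : (e - 2 * e ^ 3) * (1 - 2.1 * e) ≤ w * (1 + t * z) :=
    mul_le_mul hw.1 (by linarith) (by linarith) hw0
  have upper : w * (1 + t * z) ≤ e * (1 + 2.1 * e) :=
    mul_le_mul hw.2 (by linarith) (by linarith) he.le
  have lower0 : 0 ≤ (e - 2 * e ^ 3) * (1 - 2.1 * e) := mul_nonneg (by linarith) (by linarith)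
  rw [factor]
  constructor
  · calc e + e ^ 2 - 10 * e ^ 3 ≤ (e - 2 * e ^ 3) * (1 + (e - 2 * e ^ 3) * (1 - 2.1 * e)) := by
          linarith [pow_pos he 6, pow_le_pow_of_le_one he.le (by linarith) (show 4 ≤ 7 by norm_num)]
      _ ≤ v * (1 + w * (1 + t * z)) :=
        mul_le_mul hv.1 (by linarith) (add_nonneg zero_le_one lower0) hv0
  · calc v * (1 + w * (1 + t * z)) ≤ e * (1 + e * (1 + 2.1 * e)) :=
          mul_le_mul hv.2 (by linarith) (by linarith) he.le
      _ ≤ e + 3 * e ^ 2 := by linarith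

end Cell

section Vertex

variable {W u v x y e : ℝ} {m k : ℤ}

lemma vertexBound_of_le (h₁ : W * (1 + u * v) ≤ (1 - v + x) * (1 + u + y))
    (h₂ : W * (1 + u * v) ≤ (1 - v - x) * (1 + u - y))
    (h₃ : W * (1 + u * v) ≤ (1 + v + x) * (1 - u - y))
    (h₄ : W * (1 + u * v) ≤ (1 + v - x) * (1 - u + y)) : VertexBound W u v x y := by
  intro m k hm hk
  rw [← abs_mul, gridX, gridY]
  rcases Int.isUnit_iff.mp hm with rfl | rfl <;> rcases Int.isUnit_iff.mp hk with rfl | rfl <;>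
    push_cast
  · exact h₃.trans ((neg_le_abs _).trans' (by linarith))
  · exact h₁.trans ((le_abs_self _).trans' (by linarith))
  · exact h₂.trans ((le_abs_self _).trans' (by linarith))
  · exact h₄.trans ((neg_le_abs _).trans' (by linarith))

lemma vertexBound_of_abs_add_abs_le (he : 0 < e) (he1 : e ≤ 1 / 1000) (hu : |u - e| ≤ 2 * e ^ 2)
    (hv : |v - e| ≤ 2 * e ^ 2) (hW : W ≤ 1 - 2 * e) (hxy : |x| + |y| ≤ 1.1 * e) :
    VertexBound W u v x y := by
  have he2 := pow_succ_le_div 1 he he1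
  obtain ⟨hu1, hu2⟩ := abs_le.mp hu
  obtain ⟨hv1, hv2⟩ := abs_le.mp hv
  have prod {p q : ℝ} (hp : |p| ≤ 1.1 * e) (hq : |q| ≤ 1.1 * e) : |p * q| ≤ 0.0013 * e := by
    rw [abs_mul]
    calc |p| * |q| ≤ (1.1 * e) * (1.1 * e) := by gcongr
      _ ≤ 0.0013 * e := by linarith
  have hu' : |u| ≤ 1.1 * e := abs_le.mpr ⟨by linarith, by linarith⟩
  have hv' : |v| ≤ 1.1 * e := abs_le.mpr ⟨by linarith, by linarith⟩
  have hx : |x| ≤ 1.1 * e := by linarith [abs_nonneg y]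
  have hy : |y| ≤ 1.1 * e := by linarith [abs_nonneg x]
  have huv := abs_le.mp (prod hu' hv')
  have hux := abs_le.mp (prod hu' hx)
  have hvy := abs_le.mp (prod hv' hy)
  have hxy' := abs_le.mp (prod hx hy)
  have hWuv : W * (1 + u * v) ≤ 1 - 1.9 * e :=
    calc W * (1 + u * v) ≤ (1 - 2 * e) * (1 + u * v) := by gcongr; linarith
      _ ≤ (1 - 2 * e) * (1 + 0.0013 * e) :=
        mul_le_mul_of_nonneg_left (by linarith) (by linarith)
      _ ≤ 1 - 1.9 * e := by linarith [sq_nonneg e]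
  have := le_abs_self x
  have := le_abs_self y
  have := neg_le_abs x
  have := neg_le_abs y
  apply vertexBound_of_le <;> linarith

lemma vertexBound_of_mem_Icc (he : 0 < e) (he1 : e ≤ 1 / 1000)
    (hu : u ∈ Set.Icc (e - 2 * e ^ 3) e) (hv : v ∈ Set.Icc (e - 2 * e ^ 3) e)
    (hW : W ≤ 1 - 2 * e - 2 * e ^ 2 - 50 * e ^ 3) (hx : x ∈ Set.Icc 0 (e + 5 * e ^ 3))
    (hy : y ∈ Set.Icc 0 (e + e ^ 2 + 5 * e ^ 3)) : VertexBound W u v x y := by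
  have he2 := pow_succ_le_div 1 he he1
  have he3 := pow_succ_le_div 2 he he1
  have he4 := pow_succ_le_div 3 he he1
  have he5 := pow_succ_le_div 4 he he1
  have he6 := pow_succ_le_div 5 he he1
  have he60 : 0 < e ^ 6 := by positivity
  obtain ⟨hu1, hu2⟩ := hu
  obtain ⟨hv1, hv2⟩ := hv
  obtain ⟨hx0, hx1⟩ := hx
  obtain ⟨hy0, hy1⟩ := hy
  have hu0 : 0 ≤ u := by linarith
  have hv0 : 0 ≤ v := by linarith
  have hWuv : W * (1 + u * v) ≤ 1 - 2 * e - e ^ 2 - 50 * e ^ 3 :=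
    calc W * (1 + u * v) ≤ (1 - 2 * e - 2 * e ^ 2 - 50 * e ^ 3) * (1 + u * v) := by gcongr
      _ ≤ (1 - 2 * e - 2 * e ^ 2 - 50 * e ^ 3) * (1 + e * e) := by gcongr; linarith
      _ ≤ 1 - 2 * e - e ^ 2 - 50 * e ^ 3 := by linarith
  apply vertexBound_of_le <;> refine hWuv.trans ?_
  · calc _ ≤ (1 - e) * 1 := by linarith
      _ ≤ _ := by apply mul_le_mul <;> linarith
  · calc _ ≤ (1 - 2 * e - 5 * e ^ 3) * (1 - e ^ 2 - 7 * e ^ 3) := by linarith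
      _ ≤ _ := by apply mul_le_mul <;> linarith
  · calc _ ≤ (1 : ℝ) * (1 - 2 * e - e ^ 2 - 5 * e ^ 3) := by linarith
      _ ≤ _ := by apply mul_le_mul <;> linarith
  · calc _ ≤ (1 - 7 * e ^ 3) * (1 - e) := by linarith
      _ ≤ _ := by apply mul_le_mul <;> linarith

lemma intCast_mul_one_add_eq_gridX :
    m * (1 + u * v) = (gridX v x m k - x) + v * (gridY u y m k - y) := by
  simp only [gridX, gridY]
  ring

lemma intCast_mul_one_add_eq_gridY :
    k * (1 + u * v) = u * (gridX v x m k - x) - (gridY u y m k - y) := by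
  simp only [gridX, gridY]
  ring

lemma gridY_ne_zero (huv : 0 ≤ u * v) (hk : Odd k) (hX : |gridX v x m k| ≤ 2)
    (h : |u| * (2 + |x|) + |y| < 1) : gridY u y m k ≠ 0 := by
  intro hY
  have key := intCast_mul_one_add_eq_gridY (u := u) (v := v) (x := x) (y := y) (m := m) (k := k)
  rw [hY, zero_sub, sub_neg_eq_add] at key
  have hk1 : (1 : ℝ) ≤ |(k : ℝ)| := by
    exact_mod_cast Int.one_le_abs (by rintro rfl; simp at hk)
  have : |(k : ℝ)| ≤ |u| * (2 + |x|) + |y| :=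
    calc |(k : ℝ)| ≤ |(k : ℝ)| * |1 + u * v| :=
          le_mul_of_one_le_right (abs_nonneg _) ((le_abs_self _).trans' (by linarith))
      _ = |u * (gridX v x m k - x) + y| := by rw [← abs_mul, key]
      _ ≤ |u| * |gridX v x m k - x| + |y| := by rw [← abs_mul]; exact abs_add_le _ _
      _ ≤ |u| * (2 + |x|) + |y| := by gcongr; exact (abs_sub _ _).trans (by gcongr)
  linarith

lemma isUnit_of_abs_gridX_le (hu : 0 ≤ u) (hv : 0 ≤ v) (hv1 : v ≤ 1) (hm : Odd m)
    (hxy : |x| + |y| ≤ 0.5) (hX : |gridX v x m k| ≤ 2) (hY : 2 * v * |gridY u y m k| < 1) :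
    IsUnit m := by
  by_contra hm1
  have : |(m : ℝ)| ≤ (2 + |x|) + (v * |gridY u y m k| + |y|) :=
    calc |(m : ℝ)| ≤ |(m : ℝ)| * |1 + u * v| :=
          le_mul_of_one_le_right (abs_nonneg _)
            ((le_abs_self _).trans' (by linarith [mul_nonneg hu hv]))
      _ = |(gridX v x m k - x) + v * (gridY u y m k - y)| := by
        rw [← abs_mul, intCast_mul_one_add_eq_gridX]
      _ ≤ |gridX v x m k - x| + v * |gridY u y m k - y| := by
        rw [← abs_of_nonneg hv, ← abs_mul, abs_of_nonneg hv]
        exact abs_add_le _ _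
      _ ≤ (|gridX v x m k| + |x|) + v * (|gridY u y m k| + |y|) := by
        gcongr <;> exact abs_sub _ _
      _ ≤ (2 + |x|) + (v * |gridY u y m k| + |y|) := by
        rw [mul_add]
        gcongr
        exact mul_le_of_le_one_left (abs_nonneg y) hv1
  linarith [three_le_abs_of_odd hm hm1]

/-- The points with `2 v < |X| ≤ 2` not in the cell are so far out that `1 ≤ |X Y|`. -/
lemma VertexBound.le_of_odd (he : e ≤ 1 / 1000) (hu : u ∈ Set.Icc 0 (2 * e))
    (hv : v ∈ Set.Icc 0 (2 * e)) (hW : W * (1 + u * v) ≤ 1) (hx : |x| ≤ 2 * e) (hy : |y| ≤ 2 * e)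
    (h : VertexBound W u v x y) (hm : Odd m) (hk : Odd k) (hX : 2 * v < |gridX v x m k|)
    (hX2 : |gridX v x m k| ≤ 2) : W * (1 + u * v) ≤ |gridX v x m k| * |gridY u y m k| := by
  obtain ⟨hu0, hu1⟩ := hu
  obtain ⟨hv0, hv1⟩ := hv
  rcases le_or_gt 1 (2 * v * |gridY u y m k|) with hY | hY
  · exact (hW.trans hY).trans (by gcongr)
  have hm1 := isUnit_of_abs_gridX_le hu0 hv0 (by linarith) hm (by linarith) hX2 hY
  by_cases hk1 : IsUnit k
  · exact h m k hm1 hk1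
  refine hW.trans ?_
  have hk3 := three_le_abs_of_odd hk hk1
  have hm_abs := abs_intCast_of_isUnit hm1
  have hmu : |y + m * u| ≤ 4 * e := by
    calc |y + m * u| ≤ |y| + |m * u| := abs_add_le _ _
      _ ≤ 2 * e + 2 * e := by rw [abs_mul, hm_abs, one_mul, abs_of_nonneg hu0]; gcongr
      _ = 4 * e := by ring
  have hYk : |(|gridY u y m k| - |(k : ℝ)|)| ≤ 4 * e := by
    rw [gridY, abs_sub_comm (y + m * u) (k : ℝ)]
    refine (abs_abs_sub_abs_le _ _).trans ?_
    rwa [sub_sub_cancel_left, abs_neg]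
  have hYk1 := (abs_le.mp hYk).1
  have hXk : 1 ≤ |gridX v x m k| + (2 * e + v * |(k : ℝ)|) := by
    calc 1 = |gridX v x m k - (x + k * v)| := by rw [← hm_abs, gridX]; congr 1; ring
      _ ≤ |gridX v x m k| + |x + k * v| := abs_sub _ _
      _ ≤ |gridX v x m k| + (|x| + |k * v|) := by gcongr; exact abs_add_le _ _
      _ ≤ |gridX v x m k| + (2 * e + v * |(k : ℝ)|) := by
        rw [abs_mul, abs_of_nonneg hv0, mul_comm v]; gcongr
  have hvk : v * |(k : ℝ)| ≤ 0.51 := by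
    nlinarith [mul_le_mul_of_nonneg_left (show |(k : ℝ)| ≤ |gridY u y m k| + 4 * e by linarith) hv0]
  calc (1 : ℝ) ≤ 0.4 * 2.9 := by norm_num
    _ ≤ |gridX v x m k| * |gridY u y m k| := by gcongr <;> linarith

end Vertex

section Tails

/-- Tails of a regular continued fraction with partial quotients `a`: the forward tails
`u n = 1 / (a (n + 1) + u (n + 1))` and the backward ones `v (n + 1) = 1 / (a (n + 1) + v n)`. -/
structure CFTails (a : ℕ → ℤ) (u v : ℕ → ℝ) : Prop where
  u_pos : ∀ n, 0 < u n
  u_le : ∀ n, u n ≤ 1 / 2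
  v_nonneg : ∀ n, 0 ≤ v n
  v_le : ∀ n, v n ≤ 1 / 2
  u_mul : ∀ n, u n * (a (n + 1) + u (n + 1)) = 1
  v_mul : ∀ n, v (n + 1) * (a (n + 1) + v n) = 1

/-- The partial quotients `a` cycle through an even one next to `r` and four equal to `r`. -/
def IsBlockPeriodic (r : ℤ) (a : ℕ → ℤ) : Prop :=
  ∀ n, (n % 5 = 0 → Even (a n) ∧ |a n - r| ≤ 1) ∧ (n % 5 ≠ 0 → a n = r)

/-- The consequences of `IsBlockPeriodic r a` for the tails, where `e` stands for `1 / r`: all tails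
are close to `e`, and very close when their leading partial quotient is odd. -/
structure BlockTails (e : ℝ) (a : ℕ → ℤ) (u v : ℕ → ℝ) : Prop extends CFTails a u v where
  abs_u_sub_le : ∀ n, |u n - e| ≤ 2 * e ^ 2
  abs_v_sub_le : ∀ n, |v n - e| ≤ 2 * e ^ 2
  u_mem : ∀ n, n % 5 ≠ 4 → u n ∈ Set.Icc (e - 2 * e ^ 3) e
  v_mem : ∀ n, n % 5 ≠ 0 → v n ∈ Set.Icc (e - 2 * e ^ 3) e
  even : ∀ n, n % 5 = 0 → Even (a n)
  odd : ∀ n, n % 5 ≠ 0 → Odd (a n)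

variable {a : ℕ → ℤ} {u v : ℕ → ℝ}

lemma CFTails.v_pos (cf : CFTails a u v) (n : ℕ) : 0 < v (n + 1) :=
  (cf.v_nonneg _).lt_of_ne' (left_ne_zero_of_mul_eq_one (cf.v_mul n))

lemma CFTails.shift (cf : CFTails a u v) (N : ℕ) :
    CFTails (fun n => a (N + n)) (fun n => u (N + n)) fun n => v (N + n) :=
  ⟨fun _ => cf.u_pos _, fun _ => cf.u_le _, fun _ => cf.v_nonneg _, fun _ => cf.v_le _,
    fun n => cf.u_mul (N + n), fun n => cf.v_mul (N + n)⟩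

lemma abs_sub_le_of_mul_add_eq_one {e r c w z : ℝ} (he : 0 < e) (her : e * r = 1) (hr : 4 ≤ r)
    (hw : 0 ≤ w) (hwc : w * (c + z) = 1) (hc : |c - r| ≤ 1) (hz : 0 ≤ z) (hz1 : z ≤ 1 / 2) :
    |w - e| ≤ 2 * e ^ 2 := by
  obtain ⟨hc1, hc2⟩ := abs_le.mp hc
  have hw_le : w ≤ 4 / 3 * e := by
    have : w * (3 / 4 * r) ≤ w * (c + z) := by gcongr; linarith
    nlinarith
  have hsub : w - e = w * e * (r - c - z) := by linear_combination e * hwc - w * her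
  have hrcz : |r - c - z| ≤ 3 / 2 := abs_le.mpr ⟨by linarith, by linarith⟩
  calc |w - e| = w * e * |r - c - z| := by
        rw [hsub, abs_mul, abs_of_nonneg (mul_nonneg hw he.le)]
    _ ≤ 4 / 3 * e * e * (3 / 2) := by gcongr
    _ = 2 * e ^ 2 := by ring

lemma mem_Icc_of_mul_add_eq_one {e r w z : ℝ} (he : 0 < e) (her : e * r = 1) (hw : 0 ≤ w)
    (hwr : w * (r + z) = 1) (hz : 0 ≤ z) (hz1 : z ≤ 2 * e) : w ∈ Set.Icc (e - 2 * e ^ 3) e := by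
  have hsub : e - w = w * e * z := by linear_combination -e * hwr + w * her
  have hw_le : w ≤ e := by linarith [mul_nonneg (mul_nonneg hw he.le) hz]
  have : w * e * z ≤ e * e * (2 * e) := by gcongr
  exact ⟨by linarith, hw_le⟩

lemma CFTails.blockTails (cf : CFTails a u v) {r : ℤ} {e : ℝ} (he : 0 < e) (her : e * r = 1)
    (hr : 1000 ≤ r) (hr_odd : Odd r) {N : ℕ} (hN : 1 ≤ N)
    (hB : IsBlockPeriodic r fun n => a (N + n)) :
    BlockTails e (fun n => a (N + n)) (fun n => u (N + n)) fun n => v (N + n) := by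
  have hr' : (1000 : ℝ) ≤ r := by exact_mod_cast hr
  have he2 : 2 * e ^ 2 ≤ e := by nlinarith
  have ha (n : ℕ) : |(a (N + n) : ℝ) - r| ≤ 1 := by
    rcases eq_or_ne (n % 5) 0 with h | h
    · exact_mod_cast ((hB n).1 h).2
    · simp [(hB n).2 h]
  have hu (n : ℕ) : |u (N + n) - e| ≤ 2 * e ^ 2 :=
    abs_sub_le_of_mul_add_eq_one he her (by linarith) (cf.u_pos _).le (cf.u_mul _) (ha (n + 1))
      (cf.u_pos _).le (cf.u_le _)
  have v_mul' (n : ℕ) : v (N + n) * (a (N + n) + v (N + n - 1)) = 1 := by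
    simpa [show N + n - 1 + 1 = N + n by omega] using cf.v_mul (N + n - 1)
  have hv (n : ℕ) : |v (N + n) - e| ≤ 2 * e ^ 2 :=
    abs_sub_le_of_mul_add_eq_one he her (by linarith) (cf.v_nonneg _) (v_mul' n) (ha n)
      (cf.v_nonneg _) (cf.v_le _)
  refine ⟨cf.shift N, hu, hv, fun n h4 => ?_, fun n h0 => ?_, fun n h => ((hB n).1 h).1,
    fun n h => ?_⟩
  · have hu_mul := cf.u_mul (N + n)
    rw [show a (N + n + 1) = r from (hB (n + 1)).2 (by omega)] at hu_mul
    exact mem_Icc_of_mul_add_eq_one he her (cf.u_pos _).le hu_mul (cf.u_pos _).le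
      (by linarith [show u (N + n + 1) - e ≤ _ from (abs_le.mp (hu (n + 1))).2])
  · have hv_mul := v_mul' n
    rw [show a (N + n) = r from (hB n).2 h0] at hv_mul
    have hv1 := hv (n - 1)
    rw [show N + (n - 1) = N + n - 1 by omega] at hv1
    exact mem_Icc_of_mul_add_eq_one he her (cf.v_nonneg _) hv_mul (cf.v_nonneg _)
      (by linarith [(abs_le.mp hv1).2])
  · rwa [show a (N + n) = r from (hB n).2 h]

end Tails

section UpperBlock

/-- A grid satisfying the bound in a wide strip and localised near the origin. -/
structure CentredGrid (e W u v x y : ℝ) : Prop where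
  gridBound : GridBound W 4 u v x y
  abs_add_abs_le : |x| + |y| ≤ 2.1 * e

variable {e W : ℝ} {a : ℕ → ℤ} {u v : ℕ → ℝ} {x y : ℝ}

lemma CentredGrid.abs_x_le {u v : ℝ} (h : CentredGrid e W u v x y) : |x| ≤ 2.1 * e := by
  linarith [abs_nonneg y, h.abs_add_abs_le]

lemma CentredGrid.abs_y_le {u v : ℝ} (h : CentredGrid e W u v x y) : |y| ≤ 2.1 * e := by
  linarith [abs_nonneg x, h.abs_add_abs_le]

lemma BlockTails.centredGrid (bt : BlockTails e a u v) (he : 0 < e) (he1 : e ≤ 1 / 1000)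
    (hW : 1 - 2.05 * e ≤ W) {n : ℕ} (hx : |x| ≤ 1.01) (hy : |y| ≤ 1.2)
    (h : GridBound W 4 (u n) (v n) x y) : CentredGrid e W (u n) (v n) x y := by
  refine ⟨h, VertexBound.abs_add_abs_le he he1 (bt.abs_u_sub_le n) (bt.abs_v_sub_le n) hW hx hy
    (h.vertexBound ?_)⟩
  rw [abs_of_pos (bt.u_pos n)]
  linarith [bt.u_le n]

lemma BlockTails.centredGrid_succ (bt : BlockTails e a u v) (he : 0 < e) (he1 : e ≤ 1 / 1000)
    (hW : 1 - 2.05 * e ≤ W) {n : ℕ} {t : ℤ} (ht : Even (t + a (n + 1))) (ht1 : |(t : ℝ)| ≤ 1)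
    (hty : |y / u n - t| ≤ 1.2) (h : CentredGrid e W (u n) (v n) x y) :
    CentredGrid e W (u (n + 1)) (v (n + 1)) (v (n + 1) * (t - x)) (y / u n - t) := by
  refine bt.centredGrid he he1 hW ?_ hty ((h.gridBound.step (bt.u_mul n) (bt.v_mul n) (bt.u_pos n)
    (bt.v_pos n) ht).mono ?_)
  · calc |v (n + 1) * (t - x)| = v (n + 1) * |t - x| := by
          rw [abs_mul, abs_of_pos (bt.v_pos n)]
      _ ≤ 1 / 2 * 2 := by
          gcongr
          · exact bt.v_le _
          · exact (abs_sub _ _).trans (by linarith [h.abs_x_le])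
      _ ≤ 1.01 := by norm_num
  · rw [le_div_iff₀ (bt.u_pos n)]
    linarith [bt.u_le n]

lemma BlockTails.abs_div_u_le (bt : BlockTails e a u v) (he : 0 < e) (he1 : e ≤ 1 / 1000) {n : ℕ}
    {b : ℝ} (hb : 0 ≤ b) (hy : |y| ≤ b * e) : |y / u n| ≤ 1.01 * b := by
  have he2 := pow_succ_le_div 1 he he1
  have := (abs_le.mp (bt.abs_u_sub_le n)).1
  rw [abs_div, abs_of_pos (bt.u_pos n), div_le_iff₀ (bt.u_pos n)]
  calc |y| ≤ b * e := hy
    _ ≤ b * (1.01 * u n) := mul_le_mul_of_nonneg_left (by linarith) hb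
    _ = 1.01 * b * u n := by ring

lemma exists_isUnit_abs_sub_le {z : ℝ} (hz : |z| ≤ 2.2) : ∃ t : ℤ, IsUnit t ∧ |z - t| ≤ 1.2 := by
  obtain ⟨hz1, hz2⟩ := abs_le.mp hz
  rcases le_total 0 z with h | h
  · exact ⟨1, by simp, abs_le.mpr ⟨by push_cast; linarith, by push_cast; linarith⟩⟩
  · exact ⟨-1, by simp, abs_le.mpr ⟨by push_cast; linarith, by push_cast; linarith⟩⟩

lemma BlockTails.exists_centredGrid_succ_of_odd (bt : BlockTails e a u v) (he : 0 < e)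
    (he1 : e ≤ 1 / 1000) (hW : 1 - 2.05 * e ≤ W) {n : ℕ} (hn : (n + 1) % 5 ≠ 0)
    (h : CentredGrid e W (u n) (v n) x y) :
    ∃ (t : ℤ) (x' y' : ℝ), IsUnit t ∧ x' = v (n + 1) * (t - x) ∧ y = u n * (t + y') ∧
      0.99 * e ≤ |x'| ∧ CentredGrid e W (u (n + 1)) (v (n + 1)) x' y' := by
  have he2 := pow_succ_le_div 1 he he1
  obtain ⟨t, ht, hty⟩ := exists_isUnit_abs_sub_le <|
    (bt.abs_div_u_le (n := n) he he1 (by norm_num) h.abs_y_le).trans (by norm_num)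
  refine ⟨t, _, _, ht, rfl, ?_, ?_, bt.centredGrid_succ he he1 hW
    ((odd_of_isUnit ht).add_odd (bt.odd _ hn)) (abs_intCast_of_isUnit ht).le hty h⟩
  · rw [add_sub_cancel, mul_div_cancel₀ _ (bt.u_pos n).ne']
  · have hv := (abs_le.mp (bt.abs_v_sub_le (n + 1))).1
    have hx : |-x| ≤ 2.1 * e := by rw [abs_neg]; exact h.abs_x_le
    have htx := (abs_unit_add_mem_Icc ht hx).1
    rw [abs_mul, abs_of_pos (bt.v_pos n), sub_eq_add_neg]
    calc 0.99 * e ≤ 0.995 * e * 0.997 := by linarith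
      _ ≤ v (n + 1) * |t + -x| := by gcongr <;> linarith

lemma BlockTails.exists_centredGrid_succ_of_even (bt : BlockTails e a u v) (he : 0 < e)
    (he1 : e ≤ 1 / 1000) (hW : 1 - 2.05 * e ≤ W) {n : ℕ} (hn : (n + 1) % 5 = 0)
    (hx : 0.99 * e ≤ |x|) (h : CentredGrid e W (u n) (v n) x y) :
    ∃ x' y' : ℝ, |x'| ≤ 2.2 * e ^ 2 ∧ |y| ≤ 2.2 * e ^ 2 ∧
      CentredGrid e W (u (n + 1)) (v (n + 1)) x' y' := by
  have he2 := pow_succ_le_div 1 he he1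
  have hy : |y| ≤ 1.11 * e := by linarith [h.abs_add_abs_le]
  have h' := bt.centredGrid_succ (t := 0) he he1 hW (by simpa using bt.even _ hn) (by simp)
    (by simpa using (bt.abs_div_u_le (n := n) he he1 (by norm_num) hy).trans (by norm_num)) h
  have mul_le {c z : ℝ} (hc : 0 < c) (hce : |c - e| ≤ 2 * e ^ 2) (hz : |z| ≤ 2.1 * e) :
      |c * z| ≤ 2.2 * e ^ 2 := by
    rw [abs_mul, abs_of_pos hc]
    calc c * |z| ≤ 1.01 * e * (2.1 * e) := by
          gcongr
          linarith [(abs_le.mp hce).2]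
      _ ≤ 2.2 * e ^ 2 := by nlinarith
  refine ⟨_, _, ?_, ?_, h'⟩
  · exact mul_le (bt.v_pos n) (bt.abs_v_sub_le _) (by simpa using h.abs_x_le)
  · have hy' := h'.abs_y_le
    rw [Int.cast_zero, sub_zero] at hy'
    simpa [mul_div_cancel₀ _ (bt.u_pos n).ne'] using mul_le (bt.u_pos n) (bt.abs_u_sub_le n) hy'

section Digits

variable {u u' v v' w z : ℝ} {s t : ℤ}

lemma VertexBound.le_of_eq_digits (he : 0 < e) (he1 : e ≤ 1 / 1000)
    (hu : u ∈ Set.Icc (e - 2 * e ^ 3) e) (hu' : u' ∈ Set.Icc (e - 2 * e ^ 3) e)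
    (hv : v ∈ Set.Icc (e - 2 * e ^ 3) e) (hs : IsUnit s) (ht : IsUnit t) (hz : |z| ≤ 2.2 * e ^ 2)
    (hw : |w| ≤ 2.1 * e) (h : VertexBound W u v (v * (s - z)) (u * (t + u' * (t + w)))) :
    W ≤ 1 - 2 * e - 2 * e ^ 2 + 100 * e ^ 3 := by
  rw [sub_eq_add_neg] at h
  obtain ⟨hx1, hx2⟩ := abs_mul_unit_add_mem_Icc he he1 hv hs (z := -z) (by rwa [abs_neg])
  obtain ⟨hy1, hy2⟩ := abs_mul_unit_add_mul_unit_add_mem_Icc he he1 hu hu' ht hw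
  exact h.le_of_le_abs_add_abs he he1 hu hv hx2 hy2 (by linarith [pow_pos he 3])

lemma VertexBound.le_of_opposite_digits (he : 0 < e) (he1 : e ≤ 1 / 1000)
    (hu : u ∈ Set.Icc (e - 2 * e ^ 3) e) (hv : v ∈ Set.Icc (e - 2 * e ^ 3) e)
    (hv' : v' ∈ Set.Icc (e - 2 * e ^ 3) e) (hs : IsUnit s) (ht : IsUnit t) (hz : |z| ≤ 2.2 * e ^ 2)
    (hw : |w| ≤ 2.1 * e) (h : VertexBound W u v (v * (t - v' * ((-t : ℤ) - w))) (u * (s + z))) :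
    W ≤ 1 - 2 * e - 2 * e ^ 2 + 100 * e ^ 3 := by
  rw [show t - v' * ((-t : ℤ) - w) = t + v' * (t + w) by push_cast; ring] at h
  obtain ⟨hy1, hy2⟩ := abs_mul_unit_add_mem_Icc he he1 hu hs hz
  obtain ⟨hx1, hx2⟩ := abs_mul_unit_add_mul_unit_add_mem_Icc he he1 hv hv' ht hw
  exact h.le_of_le_abs_add_abs he he1 hu hv hx2 hy2 (by linarith [pow_pos he 3])

end Digits

/-- The digits `t₁, t₂, t₃, t₄ = ±1` of a period have `t₂ = t₃` or `t₂ = -t₃`. The first case is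
excluded at level `5 k + 6`, the second at level `5 k + 8`. -/
lemma BlockTails.le_of_centredGrid (bt : BlockTails e a u v) (he : 0 < e) (he1 : e ≤ 1 / 1000)
    (hW : 1 - 2.05 * e ≤ W) {k : ℕ}
    (h : CentredGrid e W (u (5 * k + 3)) (v (5 * k + 3)) x y) :
    W ≤ 1 - 2 * e - 2 * e ^ 2 + 100 * e ^ 3 := by
  obtain ⟨-, x₄, y₄, -, -, -, hx₄, h₄⟩ :=
    bt.exists_centredGrid_succ_of_odd he he1 hW (by omega) h
  obtain ⟨x₅, y₅, hx₅, -, h₅⟩ := bt.exists_centredGrid_succ_of_even he he1 hW (by omega) hx₄ h₄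
  obtain ⟨t₁, x₆, y₆, ht₁, rfl, -, -, h₆⟩ :=
    bt.exists_centredGrid_succ_of_odd he he1 hW (by omega) h₅
  obtain ⟨t₂, x₇, y₇, ht₂, rfl, rfl, -, h₇⟩ :=
    bt.exists_centredGrid_succ_of_odd he he1 hW (by omega) h₆
  obtain ⟨t₃, x₈, y₈, ht₃, rfl, rfl, -, h₈⟩ :=
    bt.exists_centredGrid_succ_of_odd he he1 hW (by omega) h₇
  obtain ⟨t₄, x₉, y₉, ht₄, -, rfl, hx₉, h₉⟩ :=
    bt.exists_centredGrid_succ_of_odd he he1 hW (by omega) h₈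
  obtain ⟨-, -, -, hy₉, -⟩ := bt.exists_centredGrid_succ_of_even he he1 hW (by omega) hx₉ h₉
  have vertexBound {n : ℕ} {x y : ℝ} (h : CentredGrid e W (u n) (v n) x y) :
      VertexBound W (u n) (v n) x y := by
    refine h.gridBound.vertexBound ?_
    rw [abs_of_pos (bt.u_pos n)]
    linarith [bt.u_le n, h.abs_y_le]
  rcases Int.isUnit_eq_or_eq_neg ht₂ ht₃ with rfl | rfl
  · exact VertexBound.le_of_eq_digits he he1 (bt.u_mem _ (by omega)) (bt.u_mem _ (by omega))
      (bt.v_mem _ (by omega)) ht₁ ht₂ hx₅ h₈.abs_y_le (vertexBound h₆)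
  · exact VertexBound.le_of_opposite_digits he he1 (bt.u_mem _ (by omega)) (bt.v_mem _ (by omega))
      (bt.v_mem _ (by omega)) ht₄ ht₃ hy₉ h₆.abs_x_le (vertexBound h₈)

end UpperBlock

section Upper

variable {A W δ x y α γ : ℝ} {a : ℕ → ℤ} {u v : ℕ → ℝ}

lemma exists_even_add_abs_sub_le (z : ℝ) (a : ℤ) : ∃ t : ℤ, Even (t + a) ∧ |z - t| ≤ 1 := by
  refine ⟨2 * round ((z + a) / 2) - a, by simp, ?_⟩
  push_cast
  calc |z - (2 * round ((z + a) / 2) - a)| = 2 * |(z + a) / 2 - round ((z + a) / 2)| := by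
        rw [← abs_two, ← abs_mul, abs_two]
        ring_nf
    _ ≤ 2 * (1 / 2) := by gcongr; exact abs_sub_round _
    _ = 1 := by norm_num

lemma GridBound.exists_succ (cf : CFTails a u v) (hδ : 0 ≤ δ) {n : ℕ} (hx : |x| ≤ 1 + 4 * v n)
    (hy : |y| ≤ 1) (h : GridBound W δ (u n) (v n) x y) :
    ∃ x' y', |x'| ≤ 1 + 4 * v (n + 1) ∧ |y'| ≤ 1 ∧
      GridBound W (2 * δ) (u (n + 1)) (v (n + 1)) x' y' := by
  have hu0 := cf.u_pos n
  have hv0 := cf.v_pos n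
  obtain ⟨t, ht, hyt⟩ := exists_even_add_abs_sub_le (y / u n) (a (n + 1))
  refine ⟨_, _, ?_, hyt, (h.step (cf.u_mul n) (cf.v_mul n) hu0 hv0 ht).mono ?_⟩
  · have hyu : |y / u n| ≤ a (n + 1) + u (n + 1) := by
      rw [abs_div, abs_of_pos hu0, div_le_iff₀' hu0, cf.u_mul n]
      exact hy
    have ht_abs : |(t : ℝ)| ≤ |y / u n| + |y / u n - t| := by
      simpa using abs_sub (y / u n) (y / u n - t)
    calc |v (n + 1) * (t - x)| ≤ v (n + 1) * (|(t : ℝ)| + |x|) := by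
          rw [abs_mul, abs_of_pos hv0]
          gcongr
          exact abs_sub _ _
      _ ≤ v (n + 1) * ((a (n + 1) + v n) + 4) := by
          gcongr ?_ * ?_
          linarith [cf.u_le (n + 1), cf.v_le n]
      _ = 1 + 4 * v (n + 1) := by linear_combination cf.v_mul n
  · rw [le_div_iff₀ hu0]
    nlinarith [cf.u_le n]

lemma GridBound.eventually (cf : CFTails a u v) (hδ : 0 < δ) (hx : |x| ≤ 1 + 4 * v 0) (hy : |y| ≤ 1)
    (h : GridBound W δ (u 0) (v 0) x y) :
    ∀ᶠ n in atTop, ∃ x y, |x| ≤ 1 + 4 * v n ∧ |y| ≤ 1 ∧ GridBound W 4 (u n) (v n) x y := by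
  have level (n : ℕ) : ∃ x y, |x| ≤ 1 + 4 * v n ∧ |y| ≤ 1 ∧
      GridBound W (2 ^ n * δ) (u n) (v n) x y := by
    induction n with
    | zero => exact ⟨x, y, hx, hy, by simpa using h⟩
    | succ n ih =>
      obtain ⟨x, y, hx, hy, h⟩ := ih
      rw [pow_succ', mul_assoc]
      exact h.exists_succ cf (by positivity) hx hy
  have hlarge : ∀ᶠ n : ℕ in atTop, 4 ≤ 2 ^ n * δ :=
    ((tendsto_pow_atTop_atTop_of_one_lt one_lt_two).atTop_mul_const hδ).eventually_ge_atTop 4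
  filter_upwards [hlarge] with n hn
  obtain ⟨x, y, hx, hy, h⟩ := level n
  exact ⟨x, y, hx, hy, h.mono hn⟩

lemma exists_lt_nint (hγ : ¬∃ p q : ℤ, γ = (p : ℝ) + (q : ℝ) * α) {s : Set ℤ} (hs : s.Finite) :
    ∃ δ > 0, ∀ n ∈ s, δ < nint (n * α - γ) := by
  have hpos (n : ℤ) : 0 < nint (n * α - γ) := by
    refine abs_pos.mpr fun h => hγ ⟨-round (n * α - γ), n, ?_⟩
    push_cast
    linarith
  have : ∀ᶠ δ : ℝ in nhdsWithin 0 (Set.Ioi 0), ∀ n ∈ s, δ < nint (n * α - γ) :=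
    (eventually_all_finite hs).mpr fun n _ => mem_nhdsWithin_of_mem_nhds (Iio_mem_nhds (hpos n))
  obtain ⟨δ, hδ, hδ0⟩ := (this.and self_mem_nhdsWithin).exists
  exact ⟨δ, hδ0, hδ⟩

/-- With `m = 2 n + 1` and `k = 2 l + t`, the odd grid at level `0` is made of the points
`(2 n, 2 (n α - l - γ))`. -/
lemma exists_gridBound_zero (hγ : ¬∃ p q : ℤ, γ = (p : ℝ) + (q : ℝ) * α)
    (hA : ∀ᶠ n : ℤ in cofinite, A ≤ (|n| : ℝ) * nint (n * α - γ)) :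
    ∃ δ > 0, ∃ y, |y| ≤ 1 ∧ GridBound (4 * A) δ α 0 (-1) y := by
  obtain ⟨δ, hδ, hδn⟩ := exists_lt_nint hγ hA
  obtain ⟨t, ht, hyt⟩ := exists_even_add_abs_sub_le (α + 2 * γ) 1
  refine ⟨2 * δ, by positivity, t - (α + 2 * γ), by rwa [abs_sub_comm], fun m k hm hk hY => ?_⟩
  obtain ⟨n, rfl⟩ := hm
  obtain ⟨l, hl⟩ : Even (k - t) := by
    simpa using (hk.add_odd odd_one).sub ht
  obtain rfl : k = t + 2 * l := by omega
  have eX : gridX 0 (-1) (2 * n + 1) (t + 2 * l) = 2 * n := by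
    simp [gridX]
  have eY : gridY α (t - (α + 2 * γ)) (2 * n + 1) (t + 2 * l) = 2 * (n * α - γ - l) := by
    simp only [gridY]
    push_cast
    ring
  rw [eY, abs_mul, abs_two] at hY
  rw [eX, eY, abs_mul, abs_mul, abs_two]
  have hnint : nint (n * α - γ) ≤ |n * α - γ - l| := round_le _ _
  have hn : A ≤ |(n : ℝ)| * nint (n * α - γ) := by
    by_contra hn
    linarith [hδn n hn]
  nlinarith [mul_le_mul_of_nonneg_left hnint (abs_nonneg (n : ℝ))]

lemma CFTails.eventually_gridBound (cf : CFTails a u v) (hu : u 0 = α) (hv : v 0 = 0)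
    (hγ : ¬∃ p q : ℤ, γ = (p : ℝ) + (q : ℝ) * α)
    (hA : ∀ᶠ n : ℤ in cofinite, A ≤ (|n| : ℝ) * nint (n * α - γ)) :
    ∀ᶠ n in atTop, ∃ x y, |x| ≤ 1 + 4 * v n ∧ |y| ≤ 1 ∧ GridBound (4 * A) 4 (u n) (v n) x y := by
  obtain ⟨δ, hδ, y, hy, h⟩ := exists_gridBound_zero hγ hA
  exact GridBound.eventually cf hδ (x := -1) (by simp [hv]) hy (by rwa [hu, hv])

lemma CFTails.le_four (cf : CFTails a u v) (hu : u 0 = α) (hv : v 0 = 0)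
    (hγ : ¬∃ p q : ℤ, γ = (p : ℝ) + (q : ℝ) * α)
    (hA : ∀ᶠ n : ℤ in cofinite, A ≤ (|n| : ℝ) * nint (n * α - γ)) : A ≤ 4 := by
  obtain ⟨n, x, y, hx, hy, h⟩ := (cf.eventually_gridBound hu hv hγ hA).exists
  have hu0 := (cf.u_pos n).le
  have hu1 := cf.u_le n
  have hv1 := cf.v_le n
  obtain ⟨hx1, hx2⟩ := abs_le.mp hx
  obtain ⟨hy1, hy2⟩ := abs_le.mp hy
  have hX : |gridX (v n) x 1 (-1)| ≤ 4 := by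
    rw [gridX, abs_le]
    push_cast
    constructor <;> linarith [cf.v_nonneg n]
  have hY : |gridY (u n) y 1 (-1)| ≤ 4 := by
    rw [gridY, abs_le]
    push_cast
    constructor <;> linarith
  have key := h.vertexBound (by rw [abs_of_nonneg hu0]; linarith) 1 (-1) (by simp) (by simp)
  have : |gridX (v n) x 1 (-1)| * |gridY (u n) y 1 (-1)| ≤ 4 * 4 := by gcongr
  nlinarith [mul_nonneg hu0 (cf.v_nonneg n)]

theorem CFTails.le_of_eventually_le (cf : CFTails a u v) (hu : u 0 = α) (hv : v 0 = 0) {e : ℝ}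
    (he : 0 < e) (he1 : e ≤ 1 / 1000) {N : ℕ}
    (bt : BlockTails e (fun n => a (N + n)) (fun n => u (N + n)) fun n => v (N + n))
    (hγ : ¬∃ p q : ℤ, γ = (p : ℝ) + (q : ℝ) * α)
    (hA : ∀ᶠ n : ℤ in cofinite, A ≤ (|n| : ℝ) * nint (n * α - γ)) :
    4 * A ≤ 1 - 2 * e - 2 * e ^ 2 + 100 * e ^ 3 := by
  obtain ⟨n₀, hn₀⟩ := eventually_atTop.mp (cf.eventually_gridBound hu hv hγ hA)
  obtain ⟨x, y, hx, hy, h⟩ := hn₀ (N + (5 * n₀ + 3)) (by omega)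
  have he2 := pow_succ_le_div 1 he he1
  by_contra! hlt
  have hW : 1 - 2.05 * e ≤ 4 * A := by linarith [pow_pos he 3]
  have hvle := (abs_le.mp (bt.abs_v_sub_le (5 * n₀ + 3))).2
  exact hlt.not_ge (bt.le_of_centredGrid he he1 hW
    (bt.centredGrid he he1 hW (n := 5 * n₀ + 3) (by linarith) (by linarith) h))

end Upper

section Lower

variable {W e c α : ℝ} {a : ℕ → ℤ} {u v x y : ℕ → ℝ}

/-- Centres of the grids at all levels, when the digit at each level is the parity `0` or `1` of
the partial quotient. -/
structure ParityCentres (a : ℕ → ℤ) (u v x y : ℕ → ℝ) : Prop where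
  abs_x_le : ∀ n, |x n| ≤ 1
  y_mem : ∀ n, y n ∈ Set.Icc 0 1
  x_succ : ∀ n, x (n + 1) = v (n + 1) * ((a (n + 1) % 2 : ℤ) - x n)
  y_eq : ∀ n, y n = u n * ((a (n + 1) % 2 : ℤ) + y (n + 1))

lemma intCast_emod_two_mem_Icc (b : ℤ) : ((b % 2 : ℤ) : ℝ) ∈ Set.Icc 0 1 := by
  rcases Int.emod_two_eq_zero_or_one b with h | h <;> simp [h]

lemma exists_seq_eq_mul_add {t : ℕ → ℝ} (hu : ∀ n, u n ∈ Set.Icc 0 (1 / 2))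
    (ht : ∀ n, t n ∈ Set.Icc 0 1) :
    ∃ y : ℕ → ℝ, (∀ n, y n ∈ Set.Icc 0 1) ∧ ∀ n, y n = u n * (t (n + 1) + y (n + 1)) := by
  let f (n k : ℕ) : ℝ := t (n + 1 + k) * ∏ j ∈ range (k + 1), u (n + j)
  have f_nonneg (n k : ℕ) : 0 ≤ f n k :=
    mul_nonneg (ht _).1 (prod_nonneg fun _ _ => (hu _).1)
  have f_le (n k : ℕ) : f n k ≤ 1 / 2 / 2 ^ k :=
    calc f n k ≤ 1 * ∏ _j ∈ range (k + 1), (1 / 2 : ℝ) := by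
          refine mul_le_mul (ht _).2 ?_ (prod_nonneg fun _ _ => (hu _).1) zero_le_one
          exact prod_le_prod (fun _ _ => (hu _).1) fun _ _ => (hu _).2
      _ = 1 / 2 / 2 ^ k := by
          rw [prod_const, card_range, one_mul, pow_succ', one_div_pow, mul_one_div]
  have hgeom : HasSum (fun k : ℕ => (1 : ℝ) / 2 / 2 ^ k) 1 := hasSum_geometric_two' 1
  have f_summable (n : ℕ) : Summable (f n) :=
    .of_nonneg_of_le (f_nonneg n) (f_le n) hgeom.summable
  refine ⟨fun n => ∑' k, f n k, fun n => ⟨tsum_nonneg (f_nonneg n), ?_⟩, fun n => ?_⟩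
  · exact hasSum_le (f_le n) (f_summable n).hasSum hgeom
  · have f_succ (k : ℕ) : f n (k + 1) = u n * f (n + 1) k := by
      have u_succ (j : ℕ) : u (n + (j + 1)) = u (n + 1 + j) := by
        rw [add_right_comm, add_assoc]
      simp only [f, prod_range_succ' _ (k + 1), u_succ, add_zero, add_right_comm (n + 1) 1 k,
        ← add_assoc (n + 1) k 1]
      ring
    simp only [(f_summable n).tsum_eq_zero_add, f_succ, tsum_mul_left, mul_add]
    simp [f, mul_comm]

lemma CFTails.exists_parityCentres (cf : CFTails a u v) :
    ∃ x y : ℕ → ℝ, x 0 = -1 ∧ ParityCentres a u v x y := by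
  have digit := intCast_emod_two_mem_Icc
  obtain ⟨y, hy, hy_eq⟩ := exists_seq_eq_mul_add (t := fun n => (a n % 2 : ℤ))
    (fun n => ⟨(cf.u_pos n).le, cf.u_le n⟩) fun n => digit (a n)
  let x : ℕ → ℝ := Nat.rec (-1) fun n x => v (n + 1) * ((a (n + 1) % 2 : ℤ) - x)
  refine ⟨x, y, rfl, fun n => ?_, hy, fun _ => rfl, hy_eq⟩
  induction n with
  | zero => simp [x]
  | succ n ih =>
    have ht := digit (a (n + 1))
    calc |v (n + 1) * ((a (n + 1) % 2 : ℤ) - x n)|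
        ≤ 1 / 2 * (|((a (n + 1) % 2 : ℤ) : ℝ)| + |x n|) := by
          rw [abs_mul, abs_of_pos (cf.v_pos n)]
          gcongr
          · exact cf.v_le _
          · exact abs_sub _ _
      _ ≤ 1 / 2 * (1 + 1) := by
          gcongr
          rw [abs_of_nonneg ht.1]
          exact ht.2
      _ = 1 := by norm_num

lemma ParityCentres.shift (pc : ParityCentres a u v x y) (N : ℕ) :
    ParityCentres (fun n => a (N + n)) (fun n => u (N + n)) (fun n => v (N + n))
      (fun n => x (N + n)) fun n => y (N + n) :=
  ⟨fun _ => pc.abs_x_le _, fun _ => pc.y_mem _, fun n => pc.x_succ (N + n),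
    fun n => pc.y_eq (N + n)⟩

namespace ParityCentres

lemma abs_x_succ_le (pc : ParityCentres a u v x y) (bt : BlockTails e a u v) (n : ℕ) :
    |x (n + 1)| ≤ (e + 2 * e ^ 2) * (1 + |x n|) := by
  have ht := intCast_emod_two_mem_Icc (a (n + 1))
  have hv : v (n + 1) ≤ e + 2 * e ^ 2 := by linarith [(abs_le.mp (bt.abs_v_sub_le (n + 1))).2]
  rw [pc.x_succ, abs_mul, abs_of_pos (bt.v_pos n)]
  refine mul_le_mul hv ?_ (abs_nonneg _) ((bt.v_nonneg _).trans hv)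
  refine (abs_sub _ _).trans ?_
  gcongr
  rw [abs_of_nonneg ht.1]
  exact ht.2

lemma abs_x_add_two_le (pc : ParityCentres a u v x y) (bt : BlockTails e a u v) (he : 0 < e)
    (he1 : e ≤ 1 / 1000) (n : ℕ) : |x (n + 2)| ≤ 1.01 * e := by
  have he2 := pow_succ_le_div 1 he he1
  have hx1 : |x (n + 1)| ≤ 0.003 := by
    nlinarith [pc.abs_x_succ_le bt n, pc.abs_x_le n]
  nlinarith [pc.abs_x_succ_le bt (n + 1)]

lemma y_le (pc : ParityCentres a u v x y) (bt : BlockTails e a u v) (he : 0 < e)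
    (he1 : e ≤ 1 / 1000) (n : ℕ) : y n ≤ 1.01 * e := by
  have he2 := pow_succ_le_div 1 he he1
  have step (n : ℕ) : y n ≤ (e + 2 * e ^ 2) * (1 + y (n + 1)) := by
    have ht := intCast_emod_two_mem_Icc (a (n + 1))
    have hy := (pc.y_mem (n + 1)).1
    rw [pc.y_eq]
    exact mul_le_mul (by linarith [(abs_le.mp (bt.abs_u_sub_le n)).2]) (by linarith [ht.2])
      (add_nonneg ht.1 hy) (by positivity)
  have hy1 : y (n + 1) ≤ 0.003 := by
    nlinarith [step (n + 1), (pc.y_mem (n + 2)).2]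
  nlinarith [step n]

lemma abs_x_le_sq (pc : ParityCentres a u v x y) (bt : BlockTails e a u v) (he : 0 < e)
    (he1 : e ≤ 1 / 1000) {n : ℕ} (h : (n + 3) % 5 = 0) : |x (n + 3)| ≤ 1.1 * e ^ 2 := by
  have he2 := pow_succ_le_div 1 he he1
  rw [pc.x_succ, Int.even_iff.mp (bt.even _ h), Int.cast_zero, zero_sub, abs_mul, abs_neg,
    abs_of_pos (bt.v_pos _)]
  calc v (n + 3) * |x (n + 2)| ≤ (1.01 * e) * (1.01 * e) := by
        gcongr
        · linarith [(abs_le.mp (bt.abs_v_sub_le (n + 3))).2]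
        · exact pc.abs_x_add_two_le bt he he1 n
    _ ≤ 1.1 * e ^ 2 := by nlinarith

lemma y_le_sq (pc : ParityCentres a u v x y) (bt : BlockTails e a u v) (he : 0 < e)
    (he1 : e ≤ 1 / 1000) {n : ℕ} (h : n % 5 = 4) : y n ≤ 1.1 * e ^ 2 := by
  have he2 := pow_succ_le_div 1 he he1
  rw [pc.y_eq, Int.even_iff.mp (bt.even (n + 1) (by omega)), Int.cast_zero, zero_add]
  calc u n * y (n + 1) ≤ (1.01 * e) * (1.01 * e) := by
        gcongr
        · exact (pc.y_mem _).1
        · linarith [(abs_le.mp (bt.abs_u_sub_le n)).2]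
        · exact pc.y_le bt he he1 (n + 1)
    _ ≤ 1.1 * e ^ 2 := by nlinarith

lemma x_mem_Icc (pc : ParityCentres a u v x y) (bt : BlockTails e a u v) (he : 0 < e)
    (he1 : e ≤ 1 / 1000) {n : ℕ} (hn : 5 ≤ n) (h0 : n % 5 ≠ 0) :
    x n ∈ Set.Icc 0 (e + 5 * e ^ 3) := by
  have x_eq {j : ℕ} (h : (j + 1) % 5 ≠ 0) : x (j + 1) = v (j + 1) * (1 - x j) := by
    rw [pc.x_succ, Int.odd_iff.mp (bt.odd _ h), Int.cast_one]
  have x_nonneg {j : ℕ} (h : (j + 1) % 5 ≠ 0) : 0 ≤ x (j + 1) := by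
    rw [x_eq h]
    exact mul_nonneg (bt.v_nonneg _) (by linarith [(abs_le.mp (pc.abs_x_le j)).2])
  obtain ⟨j, rfl⟩ := Nat.exists_eq_add_of_le' (show 4 ≤ n by omega)
  have hprev : -(1.1 * e ^ 2) ≤ x (j + 3) := by
    by_cases h : (j + 3) % 5 = 0
    · exact (abs_le.mp (pc.abs_x_le_sq bt he he1 h)).1
    · exact (x_nonneg h).trans' (by linarith [sq_nonneg e])
  refine ⟨x_nonneg h0, ?_⟩
  calc x (j + 4) = v (j + 4) * (1 - x (j + 3)) := x_eq h0
    _ ≤ e * (1 + 1.1 * e ^ 2) := by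
      have := (bt.v_mem _ h0).2
      have := (abs_le.mp (pc.abs_x_le (j + 3))).2
      gcongr
      linarith
    _ ≤ e + 5 * e ^ 3 := by linarith [pow_pos he 3]

lemma y_mem_Icc (pc : ParityCentres a u v x y) (bt : BlockTails e a u v) (he : 0 < e)
    (he1 : e ≤ 1 / 1000) {n : ℕ} (h0 : n % 5 ≠ 0) (h4 : n % 5 ≠ 4) :
    y n ∈ Set.Icc 0 (e + e ^ 2 + 5 * e ^ 3) := by
  have he3 := pow_succ_le_div 2 he he1
  have he4 := pow_succ_le_div 3 he he1
  have step {j : ℕ} {b : ℝ} (h4 : j % 5 ≠ 4) (hb : y (j + 1) ≤ b) :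
      y j ≤ e * (1 + b) := by
    rw [pc.y_eq, Int.odd_iff.mp (bt.odd (j + 1) (by omega)), Int.cast_one]
    have := (pc.y_mem (j + 1)).1
    have := (bt.u_mem j h4).2
    gcongr
  have h3 {j : ℕ} (h : j % 5 = 3) : y j ≤ e + 1.1 * e ^ 3 :=
    (step (by omega) (pc.y_le_sq bt he he1 (by omega))).trans (by linarith)
  have h2 {j : ℕ} (h : j % 5 = 2) : y j ≤ e + e ^ 2 + e ^ 3 :=
    (step (by omega) (h3 (by omega))).trans (by linarith [pow_pos he 3])
  refine ⟨(pc.y_mem n).1, ?_⟩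
  obtain h | h | h : n % 5 = 1 ∨ n % 5 = 2 ∨ n % 5 = 3 := by omega
  · exact (step h4 (h2 (by omega))).trans (by linarith [pow_pos he 3])
  · exact (h2 h).trans (by linarith [pow_pos he 3])
  · exact (h3 h).trans (by linarith [pow_pos he 3, sq_nonneg e])

lemma vertexBound (pc : ParityCentres a u v x y) (bt : BlockTails e a u v) (he : 0 < e)
    (he1 : e ≤ 1 / 1000) {n : ℕ} (hn : 5 ≤ n) :
    VertexBound (1 - 2 * e - 2 * e ^ 2 - 50 * e ^ 3) (u n) (v n) (x n) (y n) := by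
  have he2 := pow_succ_le_div 1 he he1
  obtain ⟨j, rfl⟩ := Nat.exists_eq_add_of_le' (show 3 ≤ n by omega)
  have hx := pc.abs_x_add_two_le bt he he1 (j + 1)
  have hy := pc.y_le bt he he1 (j + 3)
  have of_abs_add_abs_le (hxy : |x (j + 3)| + |y (j + 3)| ≤ 1.1 * e) :
      VertexBound (1 - 2 * e - 2 * e ^ 2 - 50 * e ^ 3) (u (j + 3)) (v (j + 3)) (x (j + 3))
        (y (j + 3)) :=
    vertexBound_of_abs_add_abs_le he he1 (bt.abs_u_sub_le _) (bt.abs_v_sub_le _)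
      (by linarith [sq_nonneg e, pow_pos he 3]) hxy
  rw [abs_of_nonneg (pc.y_mem (j + 3)).1] at of_abs_add_abs_le
  by_cases h0 : (j + 3) % 5 = 0
  · exact of_abs_add_abs_le (by linarith [pc.abs_x_le_sq bt he he1 h0])
  by_cases h4 : (j + 3) % 5 = 4
  · exact of_abs_add_abs_le (by linarith [pc.y_le_sq bt he he1 h4])
  exact vertexBound_of_mem_Icc he he1 (bt.u_mem _ h4) (bt.v_mem _ h0) le_rfl
    (pc.x_mem_Icc bt he he1 hn h0) (pc.y_mem_Icc bt he he1 h0 h4)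

end ParityCentres

/-- The grid point with indices `(m, k)` is off the axis `Y = 0` and, if farther than `c` from the
axis `X = 0`, satisfies the inequality of `GridBound`. -/
def FarPointBound (W c u v x y : ℝ) (m k : ℤ) : Prop :=
  gridY u y m k ≠ 0 ∧
    (c < |gridX v x m k| → W * (1 + u * v) ≤ |gridX v x m k| * |gridY u y m k|)

lemma FarPointBound.of_step {a t m k : ℤ} {u u' v v' x y y' : ℝ} (hu : u * (a + u') = 1)
    (hv : v' * (a + v) = 1) (hy : y = u * (t + y')) (hu0 : 0 < u) (hv0 : 0 < v')
    (h : FarPointBound W c u' v' (v' * (t - x)) y' (-k) (-m - t + k * a)) :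
    FarPointBound W (c / v') u v x y m k := by
  obtain ⟨hY, hXY⟩ := h
  rw [gridX_step hv, abs_mul, abs_neg, abs_of_pos hv0] at hXY
  rw [FarPointBound, ← gridY_step hu hy, abs_mul, abs_of_pos hu0, div_lt_iff₀' hv0]
  refine ⟨mul_ne_zero hu0.ne' hY, fun hX => le_of_mul_le_mul_left ?_ hv0⟩
  calc v' * (W * (1 + u * v)) = u * (W * (1 + u' * v')) := by
        linear_combination W * one_add_mul_step hu hv
    _ ≤ u * (v' * |gridX v x m k| * |gridY u' y' (-k) (-m - t + k * a)|) :=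
        mul_le_mul_of_nonneg_left (hXY hX) hu0.le
    _ = _ := by ring

namespace ParityCentres

lemma exists_farPointBound_step (pc : ParityCentres a u v x y) (cf : CFTails a u v) (n : ℕ)
    {m k : ℤ} (hm : Odd m) (hk : Odd k) :
    ∃ m' k', Odd m' ∧ Odd k' ∧
      |gridX (v (n + 1)) (x (n + 1)) m' k'| = v (n + 1) * |gridX (v n) (x n) m k| ∧
      ∀ c, FarPointBound W c (u (n + 1)) (v (n + 1)) (x (n + 1)) (y (n + 1)) m' k' →
        FarPointBound W (c / v (n + 1)) (u n) (v n) (x n) (y n) m k := by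
  have ht : Even (a (n + 1) % 2 + a (n + 1)) := by
    rw [Int.even_iff]
    omega
  refine ⟨_, _, hk.neg, odd_step ht hm hk, ?_, fun c h => .of_step (t := a (n + 1) % 2)
    (cf.u_mul n) (cf.v_mul n) (pc.y_eq n) (cf.u_pos n) (cf.v_pos n) ?_⟩
  · rw [pc.x_succ, gridX_step (cf.v_mul n), abs_mul, abs_neg, abs_of_pos (cf.v_pos n)]
  · rwa [← pc.x_succ]

/-- A step of the continued fraction at least halves `|X|`, so every point eventually enters the
strip `|X| ≤ 2`. -/
lemma farPointBound_of_abs_gridX_le (pc : ParityCentres a u v x y) (cf : CFTails a u v) {N : ℕ}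
    (h : ∀ n ≥ N, ∀ m k, Odd m → Odd k → |gridX (v n) (x n) m k| ≤ 2 →
      FarPointBound W (2 * v n) (u n) (v n) (x n) (y n) m k) :
    ∀ n ≥ N, ∀ m k, Odd m → Odd k → FarPointBound W (2 * v n) (u n) (v n) (x n) (y n) m k := by
  have climb (K : ℕ) : ∀ n ≥ N, ∀ m k, Odd m → Odd k → |gridX (v n) (x n) m k| ≤ 2 ^ K * 2 →
      FarPointBound W (2 * v n) (u n) (v n) (x n) (y n) m k := by
    induction K with
    | zero => simpa using h
    | succ K ih =>
      intro n hn m k hm hk hX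
      rcases le_or_gt |gridX (v n) (x n) m k| 2 with hX2 | hX2
      · exact h n hn m k hm hk hX2
      obtain ⟨m', k', hm', hk', hX', hstep⟩ := pc.exists_farPointBound_step (W := W) cf n hm hk
      have hfar := hstep _ (ih (n + 1) (by omega) m' k' hm' hk' ?_)
      · rw [mul_div_cancel_right₀ _ (cf.v_pos n).ne'] at hfar
        exact ⟨hfar.1, fun _ => hfar.2 hX2⟩
      · calc _ = v (n + 1) * |gridX (v n) (x n) m k| := hX'
          _ ≤ 1 / 2 * (2 ^ (K + 1) * 2) := by
            gcongr
            exact cf.v_le _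
          _ = 2 ^ K * 2 := by ring
  intro n hn m k hm hk
  obtain ⟨K, hK⟩ := pow_unbounded_of_one_lt |gridX (v n) (x n) m k| one_lt_two
  exact climb K n hn m k hm hk (by linarith [abs_nonneg (gridX (v n) (x n) m k)])

lemma exists_farPointBound_zero (pc : ParityCentres a u v x y) (cf : CFTails a u v) (n : ℕ)
    (h : ∀ m k, Odd m → Odd k → FarPointBound W c (u n) (v n) (x n) (y n) m k) :
    ∃ c, ∀ m k, Odd m → Odd k → FarPointBound W c (u 0) (v 0) (x 0) (y 0) m k := by
  induction n generalizing c with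
  | zero => exact ⟨c, h⟩
  | succ n ih =>
    refine ih (c := c / v (n + 1)) fun m k hm hk => ?_
    obtain ⟨m', k', hm', hk', -, hstep⟩ := pc.exists_farPointBound_step (W := W) cf n hm hk
    exact hstep c (h m' k' hm' hk')

lemma farPointBound_of_blockTails (pc : ParityCentres a u v x y) (bt : BlockTails e a u v)
    (he : 0 < e) (he1 : e ≤ 1 / 1000) :
    ∀ n ≥ 5, ∀ m k, Odd m → Odd k →
      FarPointBound (1 - 2 * e - 2 * e ^ 2 - 50 * e ^ 3) (2 * v n) (u n) (v n) (x n) (y n) m k := by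
  have he2 := pow_succ_le_div 1 he he1
  refine pc.farPointBound_of_abs_gridX_le bt.toCFTails fun n hn m k hm hk hX => ?_
  have hu : u n ∈ Set.Icc 0 (2 * e) :=
    ⟨(bt.u_pos n).le, by linarith [(abs_le.mp (bt.abs_u_sub_le n)).2]⟩
  have hv : v n ∈ Set.Icc 0 (2 * e) :=
    ⟨bt.v_nonneg n, by linarith [(abs_le.mp (bt.abs_v_sub_le n)).2]⟩
  have hx : |x n| ≤ 2 * e := by
    obtain ⟨j, rfl⟩ := Nat.exists_eq_add_of_le' (show 2 ≤ n by omega)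
    linarith [pc.abs_x_add_two_le bt he he1 j]
  have hy : |y n| ≤ 2 * e := by
    rw [abs_of_nonneg (pc.y_mem n).1]
    linarith [pc.y_le bt he he1 n]
  have huv : 0 ≤ u n * v n := mul_nonneg hu.1 hv.1
  have huv_le : u n * v n ≤ e :=
    calc u n * v n ≤ 2 * e * (2 * e) := mul_le_mul hu.2 hv.2 hv.1 (by positivity)
      _ ≤ e := by linarith
  refine ⟨gridY_ne_zero huv hk hX ?_, fun hX' => (pc.vertexBound bt he he1 hn).le_of_odd he1 hu hv
    ?_ hx hy hm hk hX' hX⟩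
  · rw [abs_of_nonneg hu.1]
    have : u n * (2 + |x n|) ≤ 2 * e * 3 :=
      mul_le_mul hu.2 (by linarith) (by positivity) (by positivity)
    linarith
  · nlinarith [pow_pos he 3]

end ParityCentres

/-- As in `exists_gridBound_zero`, the points of the grid at level `0` are
`(2 n, 2 (n α - l - γ))`, here with `γ = (1 - α - y 0) / 2`. -/
theorem CFTails.exists_eventually_le (cf : CFTails a u v) (hu : u 0 = α) (hv : v 0 = 0)
    (he : 0 < e) (he1 : e ≤ 1 / 1000) {N : ℕ}
    (bt : BlockTails e (fun n => a (N + n)) (fun n => u (N + n)) fun n => v (N + n)) :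
    ∃ γ, (¬∃ p q : ℤ, γ = (p : ℝ) + (q : ℝ) * α) ∧ ∀ᶠ n : ℤ in cofinite,
      (1 - 2 * e - 2 * e ^ 2 - 50 * e ^ 3) / 4 ≤ (|n| : ℝ) * nint (n * α - γ) := by
  obtain ⟨x, y, hx, pc⟩ := cf.exists_parityCentres
  obtain ⟨c, hc⟩ := pc.exists_farPointBound_zero cf (N + 5)
    ((pc.shift N).farPointBound_of_blockTails bt he he1 5 le_rfl)
  rw [hu, hv, hx] at hc
  have eX (n l : ℤ) : gridX 0 (-1) (2 * n + 1) (2 * l + 1) = 2 * n := by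
    simp [gridX]
  have eY (n l : ℤ) : gridY α (y 0) (2 * n + 1) (2 * l + 1) =
      2 * (n * α - (1 - α - y 0) / 2 - l) := by
    simp only [gridY]
    push_cast
    ring
  have hpoint (n l : ℤ) := hc _ _ (odd_two_mul_add_one n) (odd_two_mul_add_one l)
  simp only [FarPointBound, eX, eY] at hpoint
  refine ⟨(1 - α - y 0) / 2, ?_, ?_⟩
  · rintro ⟨p, q, hpq⟩
    refine (hpoint q (-p)).1 ?_
    rw [hpq]
    push_cast
    ring
  · have hlarge : ∀ᶠ n : ℤ in cofinite, c < |(n : ℝ)| :=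
      (tendsto_norm_cocompact_atTop.comp Int.tendsto_coe_cofinite).eventually_gt_atTop c
    filter_upwards [hlarge] with n hn
    have key := (hpoint n (round (n * α - (1 - α - y 0) / 2))).2
      (by rw [abs_mul, abs_two]; linarith [abs_nonneg (n : ℝ)])
    rw [abs_mul, abs_mul, abs_two, mul_zero, add_zero, mul_one] at key
    rw [nint]
    linarith

end Lower

section Rho

variable {A B α γ : ℝ}

lemma abs_mul_nint_nonneg (α γ : ℝ) (n : ℤ) : 0 ≤ (|n| : ℝ) * nint (n * α - γ) :=
  mul_nonneg (abs_nonneg _) (abs_nonneg _)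

lemma Mval_le
    (hB : ∀ A, (∀ᶠ n : ℤ in cofinite, A ≤ (|n| : ℝ) * nint (n * α - γ)) → A ≤ B) :
    Mval α γ ≤ B :=
  liminf_le_of_le (isBoundedUnder_of ⟨0, abs_mul_nint_nonneg α γ⟩) hB

lemma le_Mval
    (hB : ∀ A, (∀ᶠ n : ℤ in cofinite, A ≤ (|n| : ℝ) * nint (n * α - γ)) → A ≤ B)
    (hA : ∀ᶠ n : ℤ in cofinite, A ≤ (|n| : ℝ) * nint (n * α - γ)) : A ≤ Mval α γ :=
  le_liminf_of_le ⟨B, hB⟩ hA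

lemma rho_le (hB0 : 0 ≤ B)
    (hB : ∀ γ, (¬∃ p q : ℤ, γ = (p : ℝ) + (q : ℝ) * α) →
      ∀ A, (∀ᶠ n : ℤ in cofinite, A ≤ (|n| : ℝ) * nint (n * α - γ)) → A ≤ B) :
    rho α ≤ B := by
  refine Real.sSup_le ?_ hB0
  rintro m ⟨γ, hγ, rfl⟩
  exact Mval_le (hB γ hγ)

lemma rho_nonneg
    (hB : ∀ γ, (¬∃ p q : ℤ, γ = (p : ℝ) + (q : ℝ) * α) →
      ∀ A, (∀ᶠ n : ℤ in cofinite, A ≤ (|n| : ℝ) * nint (n * α - γ)) → A ≤ B) :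
    0 ≤ rho α := by
  refine Real.sSup_nonneg ?_
  rintro m ⟨γ, hγ, rfl⟩
  exact le_Mval (hB γ hγ) (.of_forall (abs_mul_nint_nonneg α γ))

lemma le_rho
    (hB : ∀ γ, (¬∃ p q : ℤ, γ = (p : ℝ) + (q : ℝ) * α) →
      ∀ A, (∀ᶠ n : ℤ in cofinite, A ≤ (|n| : ℝ) * nint (n * α - γ)) → A ≤ B)
    (hγ : ¬∃ p q : ℤ, γ = (p : ℝ) + (q : ℝ) * α)
    (hA : ∀ᶠ n : ℤ in cofinite, A ≤ (|n| : ℝ) * nint (n * α - γ)) : A ≤ rho α := by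
  refine (le_Mval (hB γ hγ) hA).trans (le_csSup ⟨B, ?_⟩ ⟨γ, hγ, rfl⟩)
  rintro m ⟨γ', hγ', rfl⟩
  exact Mval_le (hB γ' hγ')

end Rho

section NICF

variable {α : ℝ}

lemma fract_inv_nicfT_le (hE : ∀ i, nicfE α i = 1) (i : ℕ) : Int.fract (nicfT α i)⁻¹ ≤ 1 / 2 := by
  by_contra h
  have := hE (i + 2)
  rw [nicfE, if_neg h] at this
  norm_num at this

lemma nicfT_succ (hE : ∀ i, nicfE α i = 1) (i : ℕ) :
    nicfT α (i + 1) = Int.fract (nicfT α i)⁻¹ := by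
  rw [nicfT, if_pos (fract_inv_nicfT_le hE i)]

lemma nicfA_succ (hE : ∀ i, nicfE α i = 1) (i : ℕ) : nicfA α (i + 1) = ⌊(nicfT α i)⁻¹⌋ := by
  rw [nicfA, if_pos (fract_inv_nicfT_le hE i)]

lemma irrational_nicfT (hE : ∀ i, nicfE α i = 1) (hα : Irrational α) (i : ℕ) :
    Irrational (nicfT α i) := by
  induction i with
  | zero => exact hα
  | succ i ih =>
    rw [nicfT_succ hE]
    exact (irrational_inv_iff.mpr ih).sub_intCast _

lemma nicfT_mem_Ioc (hE : ∀ i, nicfE α i = 1) (hα : Irrational α) (h0 : 0 < α) (h1 : α ≤ 1 / 2)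
    (i : ℕ) : nicfT α i ∈ Set.Ioc 0 (1 / 2) := by
  cases i with
  | zero => exact ⟨h0, h1⟩
  | succ i =>
    have hne := (irrational_nicfT hE hα (i + 1)).ne_zero
    rw [nicfT_succ hE] at hne ⊢
    exact ⟨(Int.fract_nonneg _).lt_of_ne' hne, fract_inv_nicfT_le hE i⟩

/-- The backward tails of a continued fraction with partial quotients `a`: the quotients
`q_{n-1} / q_n` of consecutive denominators. -/
noncomputable def backwardTail (a : ℕ → ℤ) : ℕ → ℝ
  | 0 => 0
  | n + 1 => (a (n + 1) + backwardTail a n)⁻¹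

lemma backwardTail_mem_Icc {a : ℕ → ℤ} (ha : ∀ n, 2 ≤ a (n + 1)) (n : ℕ) :
    backwardTail a n ∈ Set.Icc 0 (1 / 2) := by
  induction n with
  | zero => simp [backwardTail]
  | succ n ih =>
    have ha' : (2 : ℝ) ≤ a (n + 1) := by exact_mod_cast ha n
    have h2 : 2 ≤ a (n + 1) + backwardTail a n := by linarith [ih.1]
    rw [backwardTail, one_div]
    exact ⟨by positivity, by gcongr⟩

lemma cfTails_nicfT (hE : ∀ i, nicfE α i = 1) (hα : Irrational α) (h0 : 0 < α) (h1 : α ≤ 1 / 2) :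
    CFTails (nicfA α) (nicfT α) (backwardTail (nicfA α)) := by
  have hT := nicfT_mem_Ioc hE hα h0 h1
  have hA (n : ℕ) : 2 ≤ nicfA α (n + 1) := by
    rw [nicfA_succ hE, Int.le_floor, Int.cast_ofNat, le_inv_comm₀ two_pos (hT n).1, ← one_div]
    exact (hT n).2
  have hV := backwardTail_mem_Icc hA
  refine ⟨fun n => (hT n).1, fun n => (hT n).2, fun n => (hV n).1, fun n => (hV n).2,
    fun n => ?_, fun n => ?_⟩
  · rw [nicfA_succ hE, nicfT_succ hE, Int.floor_add_fract]
    exact mul_inv_cancel₀ (hT n).1.ne'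
  · have hA' : (2 : ℝ) ≤ nicfA α (n + 1) := by exact_mod_cast hA n
    exact inv_mul_cancel₀ (by linarith [(hV n).1])

end NICF

section Asymptotics

variable {α : ℝ}

theorem abs_rho_sub_le_of_isBlockPeriodic (hE : ∀ i, nicfE α i = 1) (hα : Irrational α)
    (h0 : 0 < α) (h1 : α ≤ 1 / 2) {r : ℤ} (hr : 0 < r) (hr_odd : Odd r) {N : ℕ} (hN : 1 ≤ N)
    (hB : IsBlockPeriodic r fun n => nicfA α (N + n)) :
    |rho α - 1 / 4 * (1 - 2 / (r : ℝ) - 2 / (r : ℝ) ^ 2)| ≤ 10 ^ 10 / (r : ℝ) ^ 3 := by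
  have cf := cfTails_nicfT hE hα h0 h1
  have hr1 : (1 : ℝ) ≤ r := by exact_mod_cast hr
  obtain ⟨e, he_def⟩ : ∃ e, e = (r : ℝ)⁻¹ := ⟨_, rfl⟩
  have he : 0 < e := by rw [he_def]; positivity
  have her : e * r = 1 := by rw [he_def]; exact inv_mul_cancel₀ (by linarith)
  have he3 : 0 < e ^ 3 := by positivity
  have hmain : 1 / 4 * (1 - 2 / (r : ℝ) - 2 / (r : ℝ) ^ 2) = 1 / 4 * (1 - 2 * e - 2 * e ^ 2) := by
    rw [he_def]
    field_simp
  rw [hmain, div_eq_mul_inv (10 ^ 10), ← inv_pow, ← he_def, abs_le]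
  have crude : ∀ γ, (¬∃ p q : ℤ, γ = (p : ℝ) + (q : ℝ) * α) →
      ∀ A, (∀ᶠ n : ℤ in cofinite, A ≤ (|n| : ℝ) * nint (n * α - γ)) → A ≤ 4 :=
    fun γ hγ A hA => cf.le_four rfl rfl hγ hA
  rcases lt_or_ge r 1000 with hlt | hge
  · have hr_lt : (r : ℝ) < 1000 := by exact_mod_cast hlt
    have he_ge : 1 / 1000 ≤ e := by nlinarith
    have he_le : e ≤ 1 := by nlinarith
    have he3_ge : (1 / 1000) ^ 3 ≤ e ^ 3 := by gcongr
    have := rho_nonneg crude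
    have := rho_le zero_le_four crude
    constructor <;> nlinarith
  · have hr_ge : (1000 : ℝ) ≤ r := by exact_mod_cast hge
    have he_le : e ≤ 1 / 1000 := by nlinarith
    have he2 : e ^ 2 ≤ e / 1000 := by nlinarith
    have bt := cf.blockTails he her hge hr_odd hN hB
    have upper : rho α ≤ (1 - 2 * e - 2 * e ^ 2 + 100 * e ^ 3) / 4 :=
      rho_le (by linarith) fun γ hγ A hA => by
        linarith [cf.le_of_eventually_le rfl rfl he he_le bt hγ hA]
    obtain ⟨γ, hγ, hlow⟩ := cf.exists_eventually_le rfl rfl he he_le bt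
    have lower := le_rho crude hγ hlow
    constructor <;> linarith

lemma isBlockPeriodic_of_forall {r s : ℤ} {a : ℕ → ℤ} (hs : Even s) (hsr : |s - r| ≤ 1)
    (h : ∀ k, a (5 * k) = s ∧ a (5 * k + 1) = r ∧ a (5 * k + 2) = r ∧ a (5 * k + 3) = r ∧
      a (5 * k + 4) = r) : IsBlockPeriodic r a := by
  intro n
  obtain ⟨h0, h1, h2, h3, h4⟩ := h (n / 5)
  obtain ⟨j, hj, hn⟩ : ∃ j < 5, n = 5 * (n / 5) + j := ⟨n % 5, by omega, by omega⟩
  rw [show n % 5 = j by omega, hn]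
  interval_cases j <;> simp only [add_zero, h0, h1, h2, h3, h4, hs, hsr] <;> simp

end Asymptotics

/-- Theorem 6: the asymptotic value of `ρ(α)` for `α` with regular continued fraction
expansion of eventual period `R_**, R_*, R_*, R_*, R_*`. -/
theorem stmt6 :
    ∃ C : ℝ, 0 < C ∧ ∀ R : ℕ, 2 ≤ R → ∀ α : ℝ, Irrational α → 0 < α → α < 1 / 2 →
      (∀ i, nicfE α i = 1) →
      (∃ i0 : ℕ, 1 ≤ i0 ∧ ∀ k : ℕ,
        nicfA α (i0 + 5 * k) = (if Even R then (R : ℤ) else (R : ℤ) + 1) ∧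
        nicfA α (i0 + 5 * k + 1) = (if Odd R then (R : ℤ) else (R : ℤ) + 1) ∧
        nicfA α (i0 + 5 * k + 2) = (if Odd R then (R : ℤ) else (R : ℤ) + 1) ∧
        nicfA α (i0 + 5 * k + 3) = (if Odd R then (R : ℤ) else (R : ℤ) + 1) ∧
        nicfA α (i0 + 5 * k + 4) = (if Odd R then (R : ℤ) else (R : ℤ) + 1)) →
      |rho α - 1 / 4 * (1 - 2 / (if Odd R then (R : ℝ) else (R : ℝ) + 1) -
          2 / (if Odd R then (R : ℝ) else (R : ℝ) + 1) ^ 2)| ≤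
        C / (if Odd R then (R : ℝ) else (R : ℝ) + 1) ^ 3 := by
  refine ⟨10 ^ 10, by norm_num, fun R hR α hα h0 h1 hE ⟨N, hN, h⟩ => ?_⟩
  rcases Nat.even_or_odd R with hR2 | hR2
  · have hR' : Even (R : ℤ) := by exact_mod_cast hR2
    simp only [if_pos hR2, if_neg (Nat.not_odd_iff_even.mpr hR2)] at h ⊢
    simpa using abs_rho_sub_le_of_isBlockPeriodic hE hα h0 h1.le (by omega) hR'.add_one hN
      (isBlockPeriodic_of_forall hR' (by simp) h)
  · have hR' : Odd (R : ℤ) := by exact_mod_cast hR2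
    simp only [if_pos hR2, if_neg (Nat.not_even_iff_odd.mpr hR2)] at h ⊢
    simpa using abs_rho_sub_le_of_isBlockPeriodic hE hα h0 h1.le (by omega) hR' hN
      (isBlockPeriodic_of_forall hR'.add_one (by simp) h)
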